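/- arXiv:1208.2108 — 11 statements merged into one kernel-verified Lean document; each statement's English description precedes it below -/
import Mathlib

section
/- Let 3 < p < 5. Suppose y : (0,∞) → ℝ is a twice continuously differentiable function satisfying y''(r) + (2/r)·y'(r) + |y(r)|^{p-1}·y(r) = 0 for all r > 0, and suppose that r^{2/(p-1)}·y(r) → 0 both as r → 0⁺ and as r → ∞. Then y is identically zero on (0,∞). -/
open Set Filter

/-!
The Emden–Fowler substitution `w(t) = e^{a t} y(e^t)` with `a = 2/(p-1)` turns the radial equation
into the autonomous one `w'' = (2a-1) w' + a(1-a) w - |w|^{p-1} w`. Since `p < 5`, the coefficient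
`2a-1` is positive, so the energy
`E = w'^2/2 - a(1-a) w^2/2 + |w|^{p+1}/(p+1)` is nondecreasing, with `E' = (2a-1) w'^2`.

As `w → 0` at `-∞`, the energy is bounded below there by a quantity tending to zero, so `E ≥ 0`
everywhere. As `w → 0` at `+∞`, the mean value theorem on `[n, n+1]` gives points `ξ_n → ∞` with
`w'(ξ_n) = w(n+1) - w(n) → 0`, so `E(ξ_n) → 0` and `E ≤ 0` everywhere. Hence `E` is identically
zero, `w'` vanishes, and `w` is a constant tending to zero.
-/

/-- The energy argument for an autonomous equation with positive anti-damping coefficient `b`: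
solutions on `ℝ` vanishing at both `±∞` are trivial. The sign of `k` is immaterial. -/
lemma antidamped_eq_zero (p b k : ℝ) (hp : 1 < p) (hb : 0 < b) (w w' : ℝ → ℝ)
    (hw : ∀ t, HasDerivAt w (w' t) t)
    (hw' : ∀ t, HasDerivAt w' (b * w' t + k * w t - |w t| ^ (p - 1) * w t) t)
    (hbot : Tendsto w atBot (nhds 0)) (htop : Tendsto w atTop (nhds 0)) :
    ∀ t, w t = 0 := by
  set E : ℝ → ℝ := fun t => (w' t) ^ 2 / 2 - k / 2 * (w t) ^ 2 + |w t| ^ (p + 1) / (p + 1) with hE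
  have hEd : ∀ t, HasDerivAt E (b * (w' t) ^ 2) t := by
    intro t
    have h1 := ((hw' t).pow 2).div_const 2
    have h2 := ((hw t).pow 2).const_mul (k / 2)
    have h3 := ((hasDerivAt_abs_rpow (w t) (p := p + 1) (by linarith)).comp t (hw t)).div_const
      (p + 1)
    refine ((h1.sub h2).add h3).congr_deriv ?_
    rw [show p + 1 - 2 = p - 1 by ring]
    have : p + 1 ≠ 0 := by linarith
    field_simp
    ring
  have hmono : Monotone E := monotone_of_deriv_nonneg (fun t => (hEd t).differentiableAt)
    (fun t => by rw [(hEd t).deriv]; positivity)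
  have hG : ∀ l : Filter ℝ, Tendsto w l (nhds 0) →
      Tendsto (fun t => - (k / 2) * (w t) ^ 2 + |w t| ^ (p + 1) / (p + 1)) l (nhds 0) := by
    intro l hl
    have h1 := (hl.pow 2).const_mul (-(k / 2))
    have h2 := (hl.abs.rpow_const (p := p + 1) (Or.inr (by linarith))).div_const (p + 1)
    have h3 := h1.add h2
    simpa [Real.zero_rpow (show p + 1 ≠ 0 by linarith)] using h3
  have hnonneg : ∀ t, 0 ≤ E t := by
    intro t
    refine le_of_tendsto (hG _ hbot) ?_
    filter_upwards [eventually_le_atBot t] with s hs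
    have h1 := hmono hs
    have h2 : E s = (w' s) ^ 2 / 2 - k / 2 * (w s) ^ 2 + |w s| ^ (p + 1) / (p + 1) := rfl
    nlinarith [sq_nonneg (w' s)]
  have hmvt : ∀ n : ℕ, ∃ c ∈ Ioo (n : ℝ) (n + 1), w' c = w (n + 1) - w n := by
    intro n
    obtain ⟨c, hc, h⟩ := exists_hasDerivAt_eq_slope w w' (show (n : ℝ) < n + 1 by linarith)
      (fun x _ => (hw x).continuousAt.continuousWithinAt) (fun x _ => hw x)
    exact ⟨c, hc, by simpa using h⟩
  choose ξ hξ hwξ using hmvt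
  have hξtop : Tendsto ξ atTop atTop :=
    tendsto_atTop_mono (fun n => (hξ n).1.le) tendsto_natCast_atTop_atTop
  have hw'ξ : Tendsto (fun n => w' (ξ n)) atTop (nhds 0) := by
    have h1 : Tendsto (fun n : ℕ => w n) atTop (nhds 0) := htop.comp tendsto_natCast_atTop_atTop
    have h2 : Tendsto (fun n : ℕ => w (n + 1)) atTop (nhds 0) :=
      htop.comp (tendsto_atTop_add_const_right _ 1 tendsto_natCast_atTop_atTop)
    simpa [hwξ] using h2.sub h1
  have hEξ : Tendsto (fun n => E (ξ n)) atTop (nhds 0) := by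
    have h := ((hw'ξ.pow 2).div_const 2).add ((hG _ htop).comp hξtop)
    simp only [ne_eq, OfNat.ofNat_ne_zero, not_false_eq_true, zero_pow, zero_div, add_zero] at h
    refine h.congr fun n => ?_
    simp only [hE, Function.comp]
    ring
  have hE0 : ∀ t, E t = 0 := fun t => le_antisymm
    (ge_of_tendsto hEξ ((hξtop.eventually_ge_atTop t).mono fun n hn => hmono hn)) (hnonneg t)
  have hw0 : ∀ t, w' t = 0 := by
    intro t
    have h1 : HasDerivAt E 0 t := by
      rw [show E = fun _ => 0 from funext hE0]; exact hasDerivAt_const t 0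
    have h2 := (hEd t).unique h1
    simpa [hb.ne'] using h2
  intro t
  have hconst : ∀ s, w s = w t := fun s =>
    is_const_of_deriv_eq_zero (fun x => (hw x).differentiableAt)
      (fun x => by rw [(hw x).deriv, hw0]) s t
  exact tendsto_nhds_unique
    (tendsto_const_nhds.congr fun s => (hconst s).symm) htop

/-- For `3 < p < 5`, a `C²` solution on `(0,∞)` of the radial soliton equation
`y'' + (2/r) y' + |y|^{p-1} y = 0` such that `r^{2/(p-1)} y(r) → 0` both as `r → 0⁺`
and as `r → ∞` must vanish identically on `(0,∞)`. -/
theorem no_nontrivial_radial_critical_soliton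
    (p : ℝ) (hp3 : 3 < p) (hp5 : p < 5)
    (y y' y'' : ℝ → ℝ)
    (hy : ∀ r ∈ Ioi (0:ℝ), HasDerivAt y (y' r) r)
    (hy' : ∀ r ∈ Ioi (0:ℝ), HasDerivAt y' (y'' r) r)
    (hy'' : ContinuousOn y'' (Ioi 0))
    (hode : ∀ r ∈ Ioi (0:ℝ),
      y'' r + (2 / r) * y' r + |y r| ^ (p - 1) * y r = 0)
    (hzero : Tendsto (fun r => r ^ (2 / (p - 1)) * y r)
      (nhdsWithin 0 (Ioi 0)) (nhds 0))
    (hinf : Tendsto (fun r => r ^ (2 / (p - 1)) * y r) atTop (nhds 0)) :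
    ∀ r ∈ Ioi (0:ℝ), y r = 0 := by
  have hpne : p - 1 ≠ 0 := by linarith
  set a : ℝ := 2 / (p - 1) with ha
  have hap : a * (p - 1) = 2 := by rw [ha]; field_simp
  have hb : 0 < 2 * a - 1 := by
    have : 1 / 2 < a := by rw [ha, lt_div_iff₀ (by linarith)]; linarith
    linarith
  have hexp : ∀ t : ℝ, (Real.exp t) ^ a = Real.exp (a * t) := fun t => by
    rw [← Real.exp_mul, mul_comm]
  have hE : ∀ c t : ℝ, HasDerivAt (fun t => Real.exp (c * t)) (c * Real.exp (c * t)) t := by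
    intro c t
    have h := ((hasDerivAt_id t).const_mul c).exp
    simpa [mul_comm] using h
  have key := antidamped_eq_zero p (2 * a - 1) (a * (1 - a)) (by linarith) hb
    (fun t => Real.exp (a * t) * y (Real.exp t))
    (fun t => a * (Real.exp (a * t) * y (Real.exp t)) +
      Real.exp ((a + 1) * t) * y' (Real.exp t)) ?_ ?_ ?_ ?_
  · intro r hr
    have h := key (Real.log r)
    rw [Real.exp_log hr] at h
    exact (mul_eq_zero.mp h).resolve_left (Real.exp_ne_zero _)
  · intro t
    have h1 := (hE a t).mul ((hy _ (Real.exp_pos t)).comp t (Real.hasDerivAt_exp t))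
    refine h1.congr_deriv ?_
    rw [show (a + 1) * t = a * t + t by ring, Real.exp_add]
    simp only [Function.comp]
    ring
  · intro t
    have h1 := (hE a t).mul ((hy _ (Real.exp_pos t)).comp t (Real.hasDerivAt_exp t))
    have h2 := (hE (a + 1) t).mul ((hy' _ (Real.exp_pos t)).comp t (Real.hasDerivAt_exp t))
    refine ((h1.const_mul a).add h2).congr_deriv ?_
    have hy2 : y'' (Real.exp t) = - (2 / Real.exp t) * y' (Real.exp t)
        - |y (Real.exp t)| ^ (p - 1) * y (Real.exp t) := by
      linarith [hode _ (Real.exp_pos t)]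
    -- the scaling identity `(r ^ a) ^ (p - 1) = r ^ 2`
    have habs : |Real.exp (a * t) * y (Real.exp t)| ^ (p - 1)
        = Real.exp t * Real.exp t * |y (Real.exp t)| ^ (p - 1) := by
      rw [abs_mul, abs_of_pos (Real.exp_pos _), Real.mul_rpow (Real.exp_pos _).le (abs_nonneg _),
        ← Real.exp_mul, ← Real.exp_add]
      congr 2
      linear_combination t * hap
    simp only [Function.comp]
    rw [habs, hy2, show (a + 1) * t = a * t + t by ring, Real.exp_add]
    have := Real.exp_ne_zero t
    field_simp
    ring
  · have hexp0 : Tendsto Real.exp atBot (nhdsWithin 0 (Ioi 0)) := Real.tendsto_exp_atBot_nhdsGT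
    exact (hzero.comp hexp0).congr fun t => by simp only [Function.comp, hexp]
  · exact (hinf.comp Real.tendsto_exp_atTop).congr fun t => by simp only [Function.comp, hexp]
end

section
/- Let 3 < p < 5. There exists ε = ε(p) > 0 (one may take ε^{p-1} = 2(p−3)/(p−1)²) such that the following holds: if J ⊆ (0,∞) is an open interval and v : J → ℝ is a twice continuously differentiable solution of r²v''(r) + (2(p−3)/(p−1))·r·v'(r) − (2(p−3)/(p−1)²)·v(r) + |v(r)|^{p-1}·v(r) = 0 on J with |v(r)| ≤ ε for all r ∈ J, then v admits no local maximum point r* ∈ J with v(r*) > 0 and no local minimum point r* ∈ J with v(r*) < 0. -/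
/-! Write `c = 2(p-3)/(p-1)²`, which is positive, and take `ε` with `ε^{p-1} = c/2`. At an interior
local extremum `r` the first-order term vanishes and the equation reads
`r² v'' = (c - |v|^{p-1}) v`, where the factor `c - |v|^{p-1}` is positive because `|v| ≤ ε`. So
`v''` has the strict sign of `v`: positive at a positive local maximum, negative at a negative
local minimum. Both contradict the second-order necessary condition
(`second_deriv_nonpos_of_isLocalMax`). -/

open Set Filter

/-- Second-order necessary condition: were `v'' r > 0`, the second derivative test would make `r`
also a local minimum, so `v` would be constant near `r` and `v'' r = 0`. -/
lemma second_deriv_nonpos_of_isLocalMax {v v' : ℝ → ℝ} {r w : ℝ}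
    (h1 : ∀ᶠ x in nhds r, HasDerivAt v (v' x) x) (h2 : HasDerivAt v' w r)
    (hmax : IsLocalMax v r) : w ≤ 0 := by
  by_contra! hw
  have hd : deriv v =ᶠ[nhds r] v' := h1.mono fun x hx => hx.deriv
  have hdd : deriv (deriv v) r = w := by rw [hd.deriv_eq, h2.deriv]
  have hmin : IsLocalMin v r :=
    isLocalMin_of_deriv_deriv_pos (hdd ▸ hw) hmax.deriv_eq_zero h1.self_of_nhds.continuousAt
  have hconst : v =ᶠ[nhds r] fun _ => v r := by
    filter_upwards [hmax, hmin] with x hx hx' using le_antisymm hx hx'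
  have h0 : deriv (deriv v) r = 0 := by
    rw [hconst.deriv.deriv_eq]
    simp
  linarith

/-- For `3 < p < 5` there is `ε = ε(p) > 0` such that any `C²` solution `v` of
`r² v'' + (2(p-3)/(p-1)) r v' - (2(p-3)/(p-1)²) v + |v|^{p-1} v = 0` on an open
interval `J ⊆ (0,∞)` with `|v| ≤ ε` on `J` admits no positive local maximum point
and no negative local minimum point in `J`. -/
theorem no_small_positive_max_or_negative_min
    (p : ℝ) (hp3 : 3 < p) (hp5 : p < 5) :
    ∃ ε : ℝ, 0 < ε ∧
      ∀ a b : ℝ, Ioo a b ⊆ Ioi (0:ℝ) →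
      ∀ v v' v'' : ℝ → ℝ,
        (∀ r ∈ Ioo a b, HasDerivAt v (v' r) r) →
        (∀ r ∈ Ioo a b, HasDerivAt v' (v'' r) r) →
        ContinuousOn v'' (Ioo a b) →
        (∀ r ∈ Ioo a b,
          r ^ 2 * v'' r + (2 * (p - 3) / (p - 1)) * r * v' r
            - (2 * (p - 3) / (p - 1) ^ 2) * v r + |v r| ^ (p - 1) * v r = 0) →
        (∀ r ∈ Ioo a b, |v r| ≤ ε) →
        (¬ ∃ r ∈ Ioo a b, IsLocalMaxOn v (Ioo a b) r ∧ 0 < v r) ∧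
        (¬ ∃ r ∈ Ioo a b, IsLocalMinOn v (Ioo a b) r ∧ v r < 0) := by
  have hp1 : 0 < p - 1 := by linarith
  have hc : 0 < 2 * (p - 3) / (p - 1) ^ 2 := by
    have : 0 < p - 3 := by linarith
    positivity
  set c := 2 * (p - 3) / (p - 1) ^ 2
  refine ⟨(c / 2) ^ (p - 1)⁻¹, by positivity, ?_⟩
  intro a b _ v v' v'' h1 h2 _ hode hv
  have hpow : ∀ r ∈ Ioo a b, 0 < c - |v r| ^ (p - 1) := by
    intro r hr
    have h := Real.rpow_le_rpow (abs_nonneg _) (hv r hr) hp1.le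
    rw [Real.rpow_inv_rpow (by positivity) hp1.ne'] at h
    linarith
  have h1' : ∀ r ∈ Ioo a b, ∀ᶠ x in nhds r, HasDerivAt v (v' x) x := fun r hr =>
    Filter.mem_of_superset (isOpen_Ioo.mem_nhds hr) h1
  constructor
  · rintro ⟨r, hr, hmax, hpos⟩
    have hloc := hmax.isLocalMax (isOpen_Ioo.mem_nhds hr)
    have hw := second_deriv_nonpos_of_isLocalMax (h1' r hr) (h2 r hr) hloc
    have h := hode r hr
    rw [hloc.hasDerivAt_eq_zero (h1 r hr)] at h
    nlinarith [mul_pos (hpow r hr) hpos, mul_nonneg (sq_nonneg r) (neg_nonneg.2 hw)]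
  · rintro ⟨r, hr, hmin, hneg⟩
    have hloc := hmin.isLocalMin (isOpen_Ioo.mem_nhds hr)
    have hw := second_deriv_nonpos_of_isLocalMax (v := fun x => -v x) (v' := fun x => -v' x)
      ((h1' r hr).mono fun x hx => hx.fun_neg) (h2 r hr).fun_neg hloc.neg
    have h := hode r hr
    rw [hloc.hasDerivAt_eq_zero (h1 r hr)] at h
    nlinarith [mul_pos (hpow r hr) (neg_pos.2 hneg), mul_nonneg (sq_nonneg r) (neg_nonneg.2 hw)]
end

section
/- Let 3 < p < 5. Suppose v : (0,∞) → ℝ is a twice continuously differentiable solution of r²v''(r) + (2(p−3)/(p−1))·r·v'(r) − (2(p−3)/(p−1)²)·v(r) + |v(r)|^{p-1}·v(r) = 0 on (0,∞) with v(r) → 0 as r → 0⁺ and v(r) → 0 as r → ∞. Then there exist 0 < r₁ ≤ R₁ < ∞ such that v is monotone (either nondecreasing or nonincreasing) on the interval (0, r₁) and monotone on the interval (R₁, ∞). -/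
/-!
Write the equation as `r² v'' + a r v' - b v + |v|^{p-1} v = 0`, with `b > 0`. The quantity
`h(r) = r^a v(r) v'(r)` satisfies
`h' = r^{a-2} (r² v'² + v² (b - |v|^{p-1}))`,
which is nonnegative wherever `|v|^{p-1} ≤ b`, hence close to `0` and close to `∞`
(`monotoneOn_weighted`). If `h` were positive at some point close to `∞`, it would remain positive
from there on, so `v²` would increase from a positive value and could not tend to `0`; thus
`v v' ≤ 0` near `∞` (`mul_deriv_nonpos_near_top`). Symmetrically `v v' ≥ 0` near `0`
(`mul_deriv_nonneg_near_zero`).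

Hence `v²` is monotone near each end. If `v` vanishes somewhere close to an end, it vanishes
identically from there to that end. Otherwise `v` has constant sign there, so `v'` has constant
sign too (`monotone_or_antitone_of_ne_zero`). In both cases `v` is monotone. No uniqueness theorem
for the initial value problem is needed.
-/

open Set Filter

/-- The function `r ^ a * (v * v')` is nondecreasing on every convex part of `(0,∞)` on which
the expression `r² v'² + v (a r v' + r² v'')`, which is `r ^ (2 - a)` times its derivative, is
nonnegative. -/
lemma monotoneOn_weighted (a : ℝ) (v v' v'' : ℝ → ℝ)
    (hv : ∀ r ∈ Ioi (0:ℝ), HasDerivAt v (v' r) r)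
    (hv' : ∀ r ∈ Ioi (0:ℝ), HasDerivAt v' (v'' r) r)
    (S : Set ℝ) (hS : Convex ℝ S) (hS0 : S ⊆ Ioi 0)
    (hin : ∀ r ∈ S, 0 ≤ r ^ 2 * v' r ^ 2 + v r * (a * r * v' r + r ^ 2 * v'' r)) :
    MonotoneOn (fun r => r ^ a * (v r * v' r)) S := by
  have hd : ∀ r ∈ S, HasDerivAt (fun r => r ^ a * (v r * v' r))
      (a * r ^ (a - 1) * (v r * v' r) + r ^ a * (v' r * v' r + v r * v'' r)) r := by
    intro r hr
    have h0 : (0:ℝ) < r := hS0 hr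
    exact (Real.hasDerivAt_rpow_const (Or.inl h0.ne')).mul ((hv r h0).mul (hv' r h0))
  refine monotoneOn_of_deriv_nonneg hS (fun r hr => (hd r hr).continuousAt.continuousWithinAt)
    (fun r hr => (hd r (interior_subset hr)).differentiableAt.differentiableWithinAt) ?_
  intro r hr
  have hr := interior_subset hr
  have h0 : (0:ℝ) < r := hS0 hr
  rw [(hd r hr).deriv]
  have e1 : r ^ (a - 1) = r ^ (a - 2) * r := by
    rw [← Real.rpow_add_one h0.ne']; congr 1; ring
  have e2 : r ^ a = r ^ (a - 2) * r ^ 2 := by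
    rw [← Real.rpow_natCast, ← Real.rpow_add h0]; congr 1; push_cast; ring
  have h := mul_nonneg (Real.rpow_pos_of_pos h0 (a - 2)).le (hin r hr)
  rw [e1, e2]
  linarith

lemma monotoneOn_sq (v v' : ℝ → ℝ) (S : Set ℝ) (hS : Convex ℝ S)
    (hd : ∀ r ∈ S, HasDerivAt v (v' r) r) (h : ∀ r ∈ S, 0 ≤ v r * v' r) :
    MonotoneOn (fun r => v r ^ 2) S := by
  refine monotoneOn_of_deriv_nonneg hS
    (fun r hr => ((hd r hr).pow 2).continuousAt.continuousWithinAt)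
    (fun r hr => ((hd r (interior_subset hr)).pow 2).differentiableAt.differentiableWithinAt) ?_
  intro r hr
  have hr := interior_subset hr
  have e : deriv (fun r => v r ^ 2) r = _ := ((hd r hr).pow 2).deriv
  rw [e]
  have := h r hr
  norm_num
  nlinarith

lemma antitoneOn_sq (v v' : ℝ → ℝ) (S : Set ℝ) (hS : Convex ℝ S)
    (hd : ∀ r ∈ S, HasDerivAt v (v' r) r) (h : ∀ r ∈ S, v r * v' r ≤ 0) :
    AntitoneOn (fun r => v r ^ 2) S := by
  refine antitoneOn_of_deriv_nonpos hS
    (fun r hr => ((hd r hr).pow 2).continuousAt.continuousWithinAt)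
    (fun r hr => ((hd r (interior_subset hr)).pow 2).differentiableAt.differentiableWithinAt) ?_
  intro r hr
  have hr := interior_subset hr
  have e : deriv (fun r => v r ^ 2) r = _ := ((hd r hr).pow 2).deriv
  rw [e]
  have := h r hr
  norm_num
  nlinarith

/-- A function without zeros on an interval has constant sign there, so a constant sign of `v v'`
is a constant sign of `v'`. -/
lemma monotone_or_antitone_of_ne_zero (v v' : ℝ → ℝ) (S : Set ℝ) (hS : Convex ℝ S)
    (hd : ∀ r ∈ S, HasDerivAt v (v' r) r) (hne : ∀ r ∈ S, v r ≠ 0)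
    (h : (∀ r ∈ S, 0 ≤ v r * v' r) ∨ (∀ r ∈ S, v r * v' r ≤ 0)) :
    MonotoneOn v S ∨ AntitoneOn v S := by
  have hc : ContinuousOn v S := fun r hr => (hd r hr).continuousAt.continuousWithinAt
  have hsign : (∀ r ∈ S, 0 < v r) ∨ (∀ r ∈ S, v r < 0) := by
    by_contra hcon
    push Not at hcon
    obtain ⟨⟨x, hx, hx0⟩, y, hy, hy0⟩ := hcon
    obtain ⟨z, hz, hz0⟩ := hS.isPreconnected.intermediate_value hx hy hc ⟨hx0, hy0⟩
    exact hne z hz hz0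
  have hmono : (∀ r ∈ S, 0 ≤ v' r) → MonotoneOn v S := fun h' =>
    monotoneOn_of_deriv_nonneg hS hc
      (fun r hr => (hd r (interior_subset hr)).differentiableAt.differentiableWithinAt)
      (fun r hr => by rw [(hd r (interior_subset hr)).deriv]; exact h' r (interior_subset hr))
  have hanti : (∀ r ∈ S, v' r ≤ 0) → AntitoneOn v S := fun h' =>
    antitoneOn_of_deriv_nonpos hS hc
      (fun r hr => (hd r (interior_subset hr)).differentiableAt.differentiableWithinAt)
      (fun r hr => by rw [(hd r (interior_subset hr)).deriv]; exact h' r (interior_subset hr))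
  rcases hsign with hs | hs <;> rcases h with h | h
  · exact Or.inl (hmono fun r hr => nonneg_of_mul_nonneg_right (h r hr) (hs r hr))
  · exact Or.inr (hanti fun r hr => nonpos_of_mul_nonpos_right (h r hr) (hs r hr))
  · exact Or.inr (hanti fun r hr => by nlinarith [h r hr, hs r hr])
  · exact Or.inl (hmono fun r hr => by nlinarith [h r hr, hs r hr])

lemma mul_deriv_nonpos_near_top (a R : ℝ) (hR : 0 < R) (v v' : ℝ → ℝ)
    (hd : ∀ r ∈ Ioi R, HasDerivAt v (v' r) r)
    (hm : MonotoneOn (fun r => r ^ a * (v r * v' r)) (Ioi R))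
    (hlim : Tendsto v atTop (nhds 0)) :
    ∀ r ∈ Ioi R, v r * v' r ≤ 0 := by
  intro s hs
  by_contra! hpos
  have hsub : Ici s ⊆ Ioi R := fun r hr => lt_of_lt_of_le (mem_Ioi.1 hs) hr
  have hnn : ∀ r ∈ Ici s, 0 ≤ v r * v' r := by
    intro r hr
    have h1 := hm hs (hsub hr) hr
    have h2 := mul_pos (Real.rpow_pos_of_pos (hR.trans hs) a) hpos
    exact nonneg_of_mul_nonneg_right (h2.le.trans h1)
      (Real.rpow_pos_of_pos (hR.trans (hsub hr)) a)
  have hsq := monotoneOn_sq v v' (Ici s) (convex_Ici s) (fun r hr => hd r (hsub hr)) hnn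
  have hle : v s ^ 2 ≤ 0 ^ 2 := ge_of_tendsto (hlim.pow 2) <| by
    filter_upwards [eventually_ge_atTop s] with r hr
    exact hsq self_mem_Ici hr hr
  have : v s = 0 := by nlinarith
  simp [this] at hpos

lemma mul_deriv_nonneg_near_zero (a R : ℝ) (v v' : ℝ → ℝ)
    (hd : ∀ r ∈ Ioo 0 R, HasDerivAt v (v' r) r)
    (hm : MonotoneOn (fun r => r ^ a * (v r * v' r)) (Ioo 0 R))
    (hlim : Tendsto v (nhdsWithin 0 (Ioi 0)) (nhds 0)) :
    ∀ r ∈ Ioo 0 R, 0 ≤ v r * v' r := by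
  intro s hs
  by_contra! hneg
  have hsub : Ioc 0 s ⊆ Ioo 0 R := fun r hr => ⟨hr.1, lt_of_le_of_lt hr.2 hs.2⟩
  have hnp : ∀ r ∈ Ioc 0 s, v r * v' r ≤ 0 := by
    intro r hr
    have h1 := hm (hsub hr) hs hr.2
    have h2 := mul_neg_of_pos_of_neg (Real.rpow_pos_of_pos hs.1 a) hneg
    exact nonpos_of_mul_nonpos_right (h1.trans h2.le) (Real.rpow_pos_of_pos hr.1 a)
  have hsq := antitoneOn_sq v v' (Ioc 0 s) (convex_Ioc 0 s) (fun r hr => hd r (hsub hr)) hnp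
  have hle : v s ^ 2 ≤ 0 ^ 2 := ge_of_tendsto (hlim.pow 2) <| by
    filter_upwards [Ioc_mem_nhdsGT hs.1] with r hr
    exact hsq hr ⟨hs.1, le_rfl⟩ hr.2
  have : v s = 0 := by nlinarith
  simp [this] at hneg

/-- For `3 < p < 5`, a `C²` solution on `(0,∞)` of
`r² v'' + (2(p-3)/(p-1)) r v' - (2(p-3)/(p-1)²) v + |v|^{p-1} v = 0` with `v → 0`
at `0⁺` and at `∞` is monotone near `0` and monotone near `∞`. -/
theorem monotone_near_zero_and_infinity
    (p : ℝ) (hp3 : 3 < p) (hp5 : p < 5)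
    (v v' v'' : ℝ → ℝ)
    (hv : ∀ r ∈ Ioi (0:ℝ), HasDerivAt v (v' r) r)
    (hv' : ∀ r ∈ Ioi (0:ℝ), HasDerivAt v' (v'' r) r)
    (hv'' : ContinuousOn v'' (Ioi 0))
    (hode : ∀ r ∈ Ioi (0:ℝ),
      r ^ 2 * v'' r + (2 * (p - 3) / (p - 1)) * r * v' r
        - (2 * (p - 3) / (p - 1) ^ 2) * v r + |v r| ^ (p - 1) * v r = 0)
    (hzero : Tendsto v (nhdsWithin 0 (Ioi 0)) (nhds 0))
    (hinf : Tendsto v atTop (nhds 0)) :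
    ∃ r₁ R₁ : ℝ, 0 < r₁ ∧ r₁ ≤ R₁ ∧
      (MonotoneOn v (Ioo 0 r₁) ∨ AntitoneOn v (Ioo 0 r₁)) ∧
      (MonotoneOn v (Ioi R₁) ∨ AntitoneOn v (Ioi R₁)) := by
  set a := 2 * (p - 3) / (p - 1)
  set b := 2 * (p - 3) / (p - 1) ^ 2 with hb
  have hb0 : 0 < b := div_pos (by linarith) (pow_pos (by linarith) 2)
  have hsmall : ∀ l : Filter ℝ, Tendsto v l (nhds 0) → ∀ᶠ r in l, |v r| ^ (p - 1) < b := by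
    intro l hl
    have h1 : Tendsto (fun r => |v r| ^ (p - 1)) l (nhds (|0| ^ (p - 1))) :=
      hl.abs.rpow_const (Or.inr (by linarith))
    rw [abs_zero, Real.zero_rpow (by linarith)] at h1
    exact h1.eventually_lt_const hb0
  have hin : ∀ r ∈ Ioi (0:ℝ), |v r| ^ (p - 1) < b →
      0 ≤ r ^ 2 * v' r ^ 2 + v r * (a * r * v' r + r ^ 2 * v'' r) := by
    intro r hr h
    have e : r ^ 2 * v' r ^ 2 + v r * (a * r * v' r + r ^ 2 * v'' r)
        = (r * v' r) ^ 2 + v r ^ 2 * (b - |v r| ^ (p - 1)) := by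
      linear_combination v r * hode r hr
    rw [e]
    exact add_nonneg (sq_nonneg _) (mul_nonneg (sq_nonneg _) (sub_nonneg.2 h.le))
  have hnear : ∃ r₁ : ℝ, 0 < r₁ ∧ (MonotoneOn v (Ioo 0 r₁) ∨ AntitoneOn v (Ioo 0 r₁)) := by
    obtain ⟨R, hR, hRs⟩ := mem_nhdsGT_iff_exists_Ioo_subset.1 (hsmall _ hzero)
    have hR : (0:ℝ) < R := hR
    have hS0 : Ioo 0 R ⊆ Ioi (0:ℝ) := fun r hr => hr.1
    have hd : ∀ r ∈ Ioo 0 R, HasDerivAt v (v' r) r := fun r hr => hv r (hS0 hr)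
    have hm := monotoneOn_weighted a v v' v'' hv hv' _ (convex_Ioo 0 R) hS0
      (fun r hr => hin r (hS0 hr) (hRs hr))
    have hsgn := mul_deriv_nonneg_near_zero a R v v' hd hm hzero
    by_cases hz : ∃ s ∈ Ioo 0 R, v s = 0
    · obtain ⟨s, hs, hs0⟩ := hz
      have hsq := monotoneOn_sq v v' _ (convex_Ioo 0 R) hd hsgn
      have h0 : ∀ r ∈ Ioo 0 s, v r = 0 := by
        intro r hr
        have h : v r ^ 2 ≤ v s ^ 2 := hsq ⟨hr.1, hr.2.trans hs.2⟩ hs hr.2.le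
        rw [hs0] at h
        nlinarith
      exact ⟨s, hs.1, Or.inl fun x hx y hy _ => by rw [h0 x hx, h0 y hy]⟩
    · push Not at hz
      exact ⟨R, hR, monotone_or_antitone_of_ne_zero v v' _ (convex_Ioo 0 R) hd hz (Or.inl hsgn)⟩
  have hfar : ∃ R₁ : ℝ, MonotoneOn v (Ioi R₁) ∨ AntitoneOn v (Ioi R₁) := by
    obtain ⟨R, hR, hRs⟩ := (atTop_basis_Ioi' (0:ℝ)).mem_iff.1 (hsmall _ hinf)
    have hR : (0:ℝ) < R := hR
    have hS0 : Ioi R ⊆ Ioi (0:ℝ) := Ioi_subset_Ioi hR.le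
    have hd : ∀ r ∈ Ioi R, HasDerivAt v (v' r) r := fun r hr => hv r (hS0 hr)
    have hm := monotoneOn_weighted a v v' v'' hv hv' _ (convex_Ioi R) hS0
      (fun r hr => hin r (hS0 hr) (hRs hr))
    have hsgn := mul_deriv_nonpos_near_top a R hR v v' hd hm hinf
    by_cases hz : ∃ s ∈ Ioi R, v s = 0
    · obtain ⟨s, hs, hs0⟩ := hz
      have hsq := antitoneOn_sq v v' _ (convex_Ioi R) hd hsgn
      have h0 : ∀ r ∈ Ioi s, v r = 0 := by
        intro r hr
        have h : v r ^ 2 ≤ v s ^ 2 := hsq hs (mem_Ioi.2 (lt_trans (mem_Ioi.1 hs) hr)) (le_of_lt hr)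
        rw [hs0] at h
        nlinarith
      exact ⟨s, Or.inl fun x hx y hy _ => by rw [h0 x hx, h0 y hy]⟩
    · push Not at hz
      exact ⟨R, monotone_or_antitone_of_ne_zero v v' _ (convex_Ioi R) hd hz (Or.inr hsgn)⟩
  obtain ⟨r₁, hr₁, h₁⟩ := hnear
  obtain ⟨R₁, h₂⟩ := hfar
  have hsub : Ioi (max r₁ R₁) ⊆ Ioi R₁ := Ioi_subset_Ioi (le_max_right _ _)
  exact ⟨r₁, max r₁ R₁, hr₁, le_max_left _ _, h₁,
    h₂.imp (fun h => h.mono hsub) (fun h => h.mono hsub)⟩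
end

section
/- Let 3 < p ≤ 5 and let J ⊆ (0,∞) be an interval. If v : J → ℝ is a twice continuously differentiable solution of r²v''(r) + (2(p−3)/(p−1))·r·v'(r) − (2(p−3)/(p−1)²)·v(r) + |v(r)|^{p-1}·v(r) = 0 on J, then the function Q(r) = r²·v'(r)²/2 − ((p−3)/(p−1)²)·v(r)² + |v(r)|^{p+1}/(p+1) is nondecreasing on J; indeed Q'(r) = ((5−p)/(p−1))·r·v'(r)² ≥ 0 on J. -/
open Set Filter

/-!
`Q` is an energy for the equation: differentiating it termwise gives `r v'²` plus
`v'` times the ODE without its first-order term, and by the ODE the latter equals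
`-(2(p-3)/(p-1)) r v'²`. Hence `Q' = ((5-p)/(p-1)) r v'²`, which is nonnegative for
`1 < p ≤ 5` and `r > 0`. The power `|v|^(p+1)` is differentiable even at the zeros of `v` since
`p + 1 > 1`. Monotonicity follows from the mean value theorem on the convex set `J`.
-/

/-- For `3 < p ≤ 5` and a `C²` solution of
`r² v'' + (2(p-3)/(p-1)) r v' - (2(p-3)/(p-1)²) v + |v|^{p-1} v = 0` on an interval
`J ⊆ (0,∞)`, the quantity `Q(r) = r² v'(r)²/2 - ((p-3)/(p-1)²) v(r)² + |v(r)|^{p+1}/(p+1)`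
is nondecreasing on `J`, with derivative `((5-p)/(p-1)) r v'(r)² ≥ 0`. -/
theorem monotone_quantity_Q
    (p : ℝ) (hp3 : 3 < p) (hp5 : p ≤ 5)
    (J : Set ℝ) (hJ : J ⊆ Ioi (0:ℝ)) (hJc : J.OrdConnected)
    (v v' v'' : ℝ → ℝ)
    (hv : ∀ r ∈ J, HasDerivWithinAt v (v' r) J r)
    (hv' : ∀ r ∈ J, HasDerivWithinAt v' (v'' r) J r)
    (hv'' : ContinuousOn v'' J)
    (hode : ∀ r ∈ J,
      r ^ 2 * v'' r + (2 * (p - 3) / (p - 1)) * r * v' r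
        - (2 * (p - 3) / (p - 1) ^ 2) * v r + |v r| ^ (p - 1) * v r = 0) :
    MonotoneOn (fun r => r ^ 2 * (v' r) ^ 2 / 2 - ((p - 3) / (p - 1) ^ 2) * (v r) ^ 2
      + |v r| ^ (p + 1) / (p + 1)) J ∧
    ∀ r ∈ J,
      HasDerivWithinAt (fun r => r ^ 2 * (v' r) ^ 2 / 2
          - ((p - 3) / (p - 1) ^ 2) * (v r) ^ 2 + |v r| ^ (p + 1) / (p + 1))
        ((5 - p) / (p - 1) * r * (v' r) ^ 2) J r ∧
      0 ≤ (5 - p) / (p - 1) * r * (v' r) ^ 2 := by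
  have hp1 : 0 < p - 1 := by linarith
  have hpp : p + 1 ≠ 0 := by linarith
  have hnn : ∀ r ∈ J, 0 ≤ (5 - p) / (p - 1) * r * (v' r) ^ 2 := fun r hr =>
    mul_nonneg (mul_nonneg (div_nonneg (by linarith) hp1.le) (le_of_lt (hJ hr))) (sq_nonneg _)
  have hder : ∀ r ∈ J,
      HasDerivWithinAt (fun r => r ^ 2 * (v' r) ^ 2 / 2
          - ((p - 3) / (p - 1) ^ 2) * (v r) ^ 2 + |v r| ^ (p + 1) / (p + 1))
        ((5 - p) / (p - 1) * r * (v' r) ^ 2) J r := by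
    intro r hr
    have habs : HasDerivWithinAt (fun r => |v r| ^ (p + 1))
        ((p + 1) * |v r| ^ (p - 1) * v r * v' r) J r := by
      have h := (hasDerivAt_abs_rpow (v r) (p := p + 1) (by linarith)).comp_hasDerivWithinAt r
        (hv r hr)
      rw [show p + 1 - 2 = p - 1 by ring] at h
      exact h
    have hQ := (((((hasDerivWithinAt_id r J).pow 2).mul ((hv' r hr).pow 2)).div_const 2).sub
      (((hv r hr).pow 2).const_mul ((p - 3) / (p - 1) ^ 2))).add (habs.div_const (p + 1))
    refine hQ.congr_deriv ?_
    have hcancel : (p + 1) * |v r| ^ (p - 1) * v r * v' r / (p + 1)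
        = |v r| ^ (p - 1) * v r * v' r := by field_simp
    have hcoef : (5 - p) / (p - 1) = 1 - 2 * (p - 3) / (p - 1) := by field_simp; ring
    rw [hcancel, hcoef]
    simp only [id, Pi.pow_apply]
    push_cast
    linear_combination v' r * hode r hr
  refine ⟨?_, fun r hr => ⟨hder r hr, hnn r hr⟩⟩
  exact monotoneOn_of_hasDerivWithinAt_nonneg hJc.convex
    (fun r hr => (hder r hr).continuousWithinAt)
    (fun r hr => (hder r (interior_subset hr)).mono interior_subset)
    (fun r hr => hnn r (interior_subset hr))
end

section
/- Let 3 < p < 5 and let 0 < a < R. If φ : [a,R] → ℝ is a twice continuously differentiable solution of φ''(r) = −|φ(r)+1|^{p-1}·(φ(r)+1)/r^{p-1} on [a,R], then the function r ↦ |φ(r)+1|^{p+1}/(p+1) + r^{p-1}·φ'(r)²/2 is nondecreasing on [a,R]; in particular, for every r ∈ [a,R] one has |φ(r)+1|^{p+1}/(p+1) + r^{p-1}·φ'(r)²/2 ≤ |φ(R)+1|^{p+1}/(p+1) + R^{p-1}·φ'(R)²/2, so solutions of this ODE remain bounded (together with their first derivatives) on any interval [a,R] with a > 0 and never break down at a positive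 radius when solved backwards in r. -/
/-! The energy `E(r) = |φ+1|^{p+1}/(p+1) + r^{p-1} φ'²/2` is differentiable on `[a,R]`. In its
derivative the cross terms `|φ+1|^{p-1}(φ+1) φ'` and `r^{p-1} φ' φ''` cancel by the equation, which
leaves `((p-1)/2) r^{p-2} φ'² ≥ 0`; a function with nonnegative derivative on the interior of an
interval, continuous on the interval, is nondecreasing there. -/

open Set Filter

/-- For `3 < p < 5` and `0 < a < R`, if `φ` is a `C²` solution of
`φ'' = -|φ+1|^{p-1}(φ+1)/r^{p-1}` on `[a,R]`, then
`r ↦ |φ(r)+1|^{p+1}/(p+1) + r^{p-1} φ'(r)²/2` is nondecreasing on `[a,R]`; in particular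
its value at any `r ∈ [a,R]` is at most its value at `R`. -/
theorem backward_monotone_energy
    (p : ℝ) (hp3 : 3 < p) (hp5 : p < 5)
    (a R : ℝ) (ha : 0 < a) (haR : a < R)
    (φ φ' φ'' : ℝ → ℝ)
    (hφ : ∀ r ∈ Icc a R, HasDerivWithinAt φ (φ' r) (Icc a R) r)
    (hφ' : ∀ r ∈ Icc a R, HasDerivWithinAt φ' (φ'' r) (Icc a R) r)
    (hφ'' : ContinuousOn φ'' (Icc a R))
    (hode : ∀ r ∈ Icc a R,
      φ'' r = -(|φ r + 1| ^ (p - 1) * (φ r + 1)) / r ^ (p - 1)) :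
    MonotoneOn (fun r => |φ r + 1| ^ (p + 1) / (p + 1)
      + r ^ (p - 1) * (φ' r) ^ 2 / 2) (Icc a R) ∧
    ∀ r ∈ Icc a R,
      |φ r + 1| ^ (p + 1) / (p + 1) + r ^ (p - 1) * (φ' r) ^ 2 / 2 ≤
        |φ R + 1| ^ (p + 1) / (p + 1) + R ^ (p - 1) * (φ' R) ^ 2 / 2 := by
  have key : ∀ r ∈ Icc a R, HasDerivWithinAt (fun r => |φ r + 1| ^ (p + 1) / (p + 1)
      + r ^ (p - 1) * (φ' r) ^ 2 / 2) ((p - 1) / 2 * r ^ (p - 2) * (φ' r) ^ 2) (Icc a R) r := by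
    intro r hr
    have hr0 : 0 < r := ha.trans_le hr.1
    have h1 : HasDerivWithinAt (fun r => |φ r + 1| ^ (p + 1))
        ((p + 1) * |φ r + 1| ^ (p + 1 - 2) * (φ r + 1) * φ' r) (Icc a R) r :=
      HasDerivAt.comp_hasDerivWithinAt (h₂ := fun x : ℝ => |x| ^ (p + 1)) (h := fun r => φ r + 1) r
        (hasDerivAt_abs_rpow (φ r + 1) (by linarith)) ((hφ r hr).add_const 1)
    have h2 : HasDerivWithinAt (fun r : ℝ => r ^ (p - 1)) ((p - 1) * r ^ (p - 1 - 1)) (Icc a R) r :=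
      (Real.hasDerivAt_rpow_const (Or.inl hr0.ne')).hasDerivWithinAt
    have h3 := (h1.div_const (p + 1)).add ((h2.mul ((hφ' r hr).pow 2)).div_const 2)
    refine h3.congr_deriv ?_
    have hne : r ^ (p - 1) ≠ 0 := (Real.rpow_pos_of_pos hr0 _).ne'
    have hp1 : p + 1 ≠ 0 := by linarith
    rw [hode r hr, show p + 1 - 2 = p - 1 by ring, show p - 1 - 1 = p - 2 by ring]
    simp only [Pi.pow_apply]
    field_simp
    push_cast
    ring
  have mono : MonotoneOn (fun r => |φ r + 1| ^ (p + 1) / (p + 1)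
      + r ^ (p - 1) * (φ' r) ^ 2 / 2) (Icc a R) := by
    refine monotoneOn_of_hasDerivWithinAt_nonneg (convex_Icc a R)
      (fun r hr => (key r hr).continuousWithinAt)
      (fun r hr => (key r (interior_subset hr)).mono interior_subset) (fun r hr => ?_)
    have hr0 : 0 < r := ha.trans_le (interior_subset hr).1
    have hp1 : 0 ≤ (p - 1) / 2 := by linarith
    positivity
  exact ⟨mono, fun r hr => mono hr (right_mem_Icc.2 haR.le) hr.2⟩
end

section
/- Let 3 < p < 5. There exist constants R = R(p) > 0 and C = C(p) > 0 such that there is a unique continuous function φ₀ : [R,∞) → [−1,1] with lim_{r→∞} φ₀(r) = 0 satisfying the integral equation φ₀(r) = ∫_r^∞ ( ∫_s^∞ ( −|φ₀(t)+1|^{p-1}(φ₀(t)+1)·t^{1-p} ) dt ) ds for all r ≥ R. Moreover this φ₀ is twice continuously differentiable on [R,∞), satisfies φ₀''(r) = −|φ₀(r)+1|^{p-1}(φ₀(r)+1)/r^{p-1}, and obeys the bounds |φ₀(r)| ≤ C·r^{3-p} and |φ₀'(r)| ≤ C·r^{2-p} for all r ≥ R; in particular φ₀(r) → 0 and φ₀'(r)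 → 0 as r → ∞. -/
/-!
Cutting the nonlinearity `F (u + 1) = |u + 1| ^ (p - 1) * (u + 1)` off outside `u ∈ [-1, 1]` makes it
bounded and Lipschitz on all of `ℝ` (`exists_bound_lipschitz_cutoffF`), so the integral map can be
studied on the whole Banach space of bounded continuous functions on `ℝ`, where functions on `[R, ∞)`
are extended constantly to the left of `R`.

A continuous function dominated by `M * t ^ (-a)` with `a > 1` has a tail integral that is
differentiable and dominated by `M / (a - 1) * r ^ (1 - a)` (`tail_integral`). Applying this twice,
with exponents `p - 1` and `p - 2`, bounds the double integral by a multiple of `r ^ (3 - p)`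
(`double_tail_integral`). As `p > 3`, this is small for large `R`, so the map is a `1/2`-contraction
with image in the ball of radius `1/2`. Its fixed point is therefore not affected by the cut-off,
every solution of the original equation is a fixed point of the cut-off map, and the two tail
estimates give the regularity and the decay.
-/

open Set Filter MeasureTheory

/-- The nonlinearity `F (u + 1)`, `F ρ = |ρ| ^ (p - 1) * ρ`, with `u` projected to `[-1, 1]`. -/
noncomputable def cutoffF (p u : ℝ) : ℝ :=
  |max (-1) (min u 1) + 1| ^ (p - 1) * (max (-1) (min u 1) + 1)

lemma cutoffF_of_mem {p u : ℝ} (hu : u ∈ Icc (-1 : ℝ) 1) :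
    cutoffF p u = |u + 1| ^ (p - 1) * (u + 1) := by
  unfold cutoffF
  rw [min_eq_left hu.2, max_eq_right hu.1]

lemma cutoffF_eq {p : ℝ} (hp : 3 < p) (u : ℝ) :
    cutoffF p u = (max (-1) (min u 1) + 1) ^ p := by
  have h0 : (0 : ℝ) ≤ max (-1) (min u 1) + 1 := by
    linarith [le_max_left (-1 : ℝ) (min u 1)]
  unfold cutoffF
  rw [abs_of_nonneg h0, ← Real.rpow_add_one' h0 (by linarith)]
  ring_nf

lemma exists_bound_lipschitz_cutoffF {p : ℝ} (hp : 3 < p) :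
    ∃ K : ℝ, 0 < K ∧ (∀ u, |cutoffF p u| ≤ K) ∧
      ∀ u v, |cutoffF p u - cutoffF p v| ≤ K * |u - v| := by
  have h2 : (0 : ℝ) < 2 ^ p := Real.rpow_pos_of_pos (by norm_num) _
  have hmem : ∀ u : ℝ, max (-1) (min u 1) + 1 ∈ Icc (0 : ℝ) 2 := fun u =>
    ⟨by linarith [le_max_left (-1 : ℝ) (min u 1)],
     by linarith [max_le (by norm_num : (-1 : ℝ) ≤ 1) (min_le_right u 1)]⟩
  refine ⟨p * 2 ^ p, by positivity, fun u => ?_, fun u v => ?_⟩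
  · rw [cutoffF_eq hp, abs_of_nonneg (Real.rpow_nonneg (hmem u).1 _)]
    have := Real.rpow_le_rpow (hmem u).1 (hmem u).2 (by linarith : 0 ≤ p)
    nlinarith
  · rw [cutoffF_eq hp, cutoffF_eq hp]
    have hlip := (convex_Icc (0 : ℝ) 2).norm_image_sub_le_of_norm_hasDerivWithin_le
      (f := fun x : ℝ => x ^ p) (f' := fun x => p * x ^ (p - 1)) (C := p * 2 ^ p)
      (fun x _ => (Real.hasDerivAt_rpow_const (Or.inr (by linarith))).hasDerivWithinAt)
      (fun x hx => by
        have h1 : x ^ (p - 1) ≤ 2 ^ (p - 1) := Real.rpow_le_rpow hx.1 hx.2 (by linarith)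
        have h3 : (2 : ℝ) ^ (p - 1) ≤ 2 ^ p :=
          Real.rpow_le_rpow_of_exponent_le (by norm_num) (by linarith)
        have h4 : 0 ≤ x ^ (p - 1) := Real.rpow_nonneg hx.1 _
        rw [Real.norm_eq_abs, abs_of_nonneg (by positivity)]
        exact mul_le_mul_of_nonneg_left (h1.trans h3) (by linarith))
      (hmem v) (hmem u)
    simp only [Real.norm_eq_abs] at hlip
    refine hlip.trans (mul_le_mul_of_nonneg_left ?_ (by positivity))
    have h5 := abs_max_sub_max_le_abs (min u 1) (min v 1) (-1)
    have h6 := abs_inf_sub_inf_le_abs u v 1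
    rw [max_comm (-1 : ℝ), max_comm (-1 : ℝ), add_sub_add_right_eq_sub]
    exact h5.trans h6

/-- Tail integrals of a continuous function dominated by `M * t ^ (-a)` with `a > 1`. -/
lemma tail_integral {R a M : ℝ} (hR : 0 < R) (ha : 1 < a) {h : ℝ → ℝ}
    (hc : ContinuousOn h (Ici R)) (hb : ∀ t ∈ Ici R, |h t| ≤ M * t ^ (-a)) :
    (∀ r ∈ Ici R, IntegrableOn h (Ioi r)) ∧
    (∀ r ∈ Ici R, |∫ t in Ioi r, h t| ≤ M / (a - 1) * r ^ (1 - a)) ∧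
    (∀ r ∈ Ici R, HasDerivWithinAt (fun s => ∫ t in Ioi s, h t) (-h r) (Ici R) r) := by
  have hdom : ∀ r ∈ Ici R, IntegrableOn (fun t : ℝ => M * t ^ (-a)) (Ioi r) := fun r hr =>
    (integrableOn_Ioi_rpow_of_lt (by linarith) (hR.trans_le hr)).const_mul M
  have hae : ∀ r ∈ Ici R, ∀ᵐ t ∂(volume.restrict (Ioi r)), ‖h t‖ ≤ M * t ^ (-a) := fun r hr =>
    (ae_restrict_mem measurableSet_Ioi).mono fun t ht => hb t (Ioi_subset_Ici hr ht)
  have hint : ∀ r ∈ Ici R, IntegrableOn h (Ioi r) := fun r hr =>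
    (hdom r hr).mono' ((hc.mono fun t ht => Ioi_subset_Ici hr ht).aestronglyMeasurable
      measurableSet_Ioi) (hae r hr)
  refine ⟨hint, fun r hr => ?_, fun r hr => ?_⟩
  · have h1 := norm_integral_le_of_norm_le (hdom r hr) (hae r hr)
    rw [integral_const_mul, integral_Ioi_rpow_of_lt (by linarith) (hR.trans_le hr)] at h1
    refine h1.trans (le_of_eq ?_)
    have : a - 1 ≠ 0 := by linarith
    have : -a + 1 ≠ 0 := by linarith
    rw [show -a + 1 = -(a - 1) by ring, show 1 - a = -(a - 1) by ring]
    field_simp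
  · -- Extending `h` constantly to the left of `R` gives a continuous integrand on `ℝ`.
    have hc' : Continuous fun t => h (max R t) :=
      hc.comp_continuous (by fun_prop) fun t => le_max_left R t
    have hd := (hc'.integral_hasStrictDerivAt R r).hasDerivAt.const_sub (∫ t in Ioi R, h t)
    rw [max_eq_right (show R ≤ r from hr)] at hd
    have heq : ∀ s ∈ Ici R,
        ∫ t in Ioi s, h t = (∫ t in Ioi R, h t) - ∫ t in R..s, h (max R t) := fun s hs => by
      have h1 : ∫ t in R..s, h (max R t) = ∫ t in R..s, h t := by
        refine intervalIntegral.integral_congr fun t ht => ?_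
        rw [uIcc_of_le hs] at ht
        simp only [max_eq_right ht.1]
      have h2 := intervalIntegral.integral_interval_add_Ioi (hint R self_mem_Ici) (hint s hs)
      rw [h1, ← h2]
      ring
    exact hd.hasDerivWithinAt.congr heq (heq r hr)

/-- Iterated tail integrals of `g t * t ^ (1 - p)` for `g` continuous and bounded by `M`. -/
lemma double_tail_integral {R p M : ℝ} (hR : 0 < R) (hp : 3 < p) {g : ℝ → ℝ}
    (hc : ContinuousOn g (Ici R)) (hb : ∀ t ∈ Ici R, |g t| ≤ M) :
    (∀ s ∈ Ici R, IntegrableOn (fun t => g t * t ^ (1 - p)) (Ioi s)) ∧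
    (∀ s ∈ Ici R, |∫ t in Ioi s, g t * t ^ (1 - p)| ≤ M / (p - 2) * s ^ (2 - p)) ∧
    (∀ s ∈ Ici R, HasDerivWithinAt (fun s => ∫ t in Ioi s, g t * t ^ (1 - p))
      (-(g s * s ^ (1 - p))) (Ici R) s) ∧
    (∀ r ∈ Ici R, IntegrableOn (fun s => ∫ t in Ioi s, g t * t ^ (1 - p)) (Ioi r)) ∧
    (∀ r ∈ Ici R, |∫ s in Ioi r, ∫ t in Ioi s, g t * t ^ (1 - p)|
      ≤ M / (p - 2) / (p - 3) * r ^ (3 - p)) ∧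
    (∀ r ∈ Ici R, HasDerivWithinAt (fun r => ∫ s in Ioi r, ∫ t in Ioi s, g t * t ^ (1 - p))
      (-∫ t in Ioi r, g t * t ^ (1 - p)) (Ici R) r) := by
  have hpos : ∀ t ∈ Ici R, 0 < t := fun t ht => hR.trans_le ht
  obtain ⟨i1, b1, d1⟩ := tail_integral (a := p - 1) (M := M)
    (h := fun t => g t * t ^ (1 - p)) hR (by linarith)
    (hc.mul (continuousOn_id.rpow_const fun t ht => Or.inl (hpos t ht).ne'))
    (fun t ht => by
      have h0 : 0 ≤ t ^ (1 - p) := Real.rpow_nonneg (hpos t ht).le _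
      rw [abs_mul, abs_of_nonneg h0, neg_sub]
      exact mul_le_mul_of_nonneg_right (hb t ht) h0)
  rw [show p - 1 - 1 = p - 2 by ring, show 1 - (p - 1) = 2 - p by ring] at b1
  obtain ⟨i2, b2, d2⟩ := tail_integral (a := p - 2) (M := M / (p - 2)) hR (by linarith)
    (fun s hs => (d1 s hs).continuousWithinAt)
    (fun s hs => by rw [neg_sub]; exact b1 s hs)
  rw [show p - 2 - 1 = p - 3 by ring, show 1 - (p - 2) = 3 - p by ring] at b2
  exact ⟨i1, b1, d1, i2, b2, d2⟩

/-- For `3 < p < 5` there exist `R, C > 0` and a unique continuous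
`φ₀ : [R,∞) → [-1,1]` with `φ₀ → 0` at infinity solving the fixed-point equation
`φ₀(r) = ∫_r^∞ ∫_s^∞ -|φ₀(t)+1|^{p-1}(φ₀(t)+1) t^{1-p} dt ds`; this `φ₀` is `C²`,
solves `φ₀'' = -|φ₀+1|^{p-1}(φ₀+1)/r^{p-1}`, and satisfies `|φ₀(r)| ≤ C r^{3-p}` and
`|φ₀'(r)| ≤ C r^{2-p}`, so that `φ₀, φ₀' → 0` at infinity. -/
theorem existence_fixed_point_phi
    (p : ℝ) (hp3 : 3 < p) (hp5 : p < 5) :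
    ∃ R C : ℝ, 0 < R ∧ 0 < C ∧
    ∃ φ φd φdd : ℝ → ℝ,
      ContinuousOn φ (Ici R) ∧
      (∀ r ∈ Ici R, φ r ∈ Icc (-1:ℝ) 1) ∧
      Tendsto φ atTop (nhds 0) ∧
      (∀ r ∈ Ici R, φ r =
        ∫ s in Ioi r, (∫ t in Ioi s,
          -(|φ t + 1| ^ (p - 1) * (φ t + 1)) * t ^ (1 - p))) ∧
      (∀ ψ : ℝ → ℝ,
        ContinuousOn ψ (Ici R) →
        (∀ r ∈ Ici R, ψ r ∈ Icc (-1:ℝ) 1) →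
        Tendsto ψ atTop (nhds 0) →
        (∀ r ∈ Ici R, ψ r =
          ∫ s in Ioi r, (∫ t in Ioi s,
            -(|ψ t + 1| ^ (p - 1) * (ψ t + 1)) * t ^ (1 - p))) →
        ∀ r ∈ Ici R, ψ r = φ r) ∧
      (∀ r ∈ Ici R, HasDerivWithinAt φ (φd r) (Ici R) r) ∧
      (∀ r ∈ Ici R, HasDerivWithinAt φd (φdd r) (Ici R) r) ∧
      ContinuousOn φdd (Ici R) ∧
      (∀ r ∈ Ici R, φdd r = -(|φ r + 1| ^ (p - 1) * (φ r + 1)) / r ^ (p - 1)) ∧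
      (∀ r ∈ Ici R, |φ r| ≤ C * r ^ (3 - p)) ∧
      (∀ r ∈ Ici R, |φd r| ≤ C * r ^ (2 - p)) ∧
      Tendsto φd atTop (nhds 0) := by
  obtain ⟨K, hK, hGb, hGl⟩ := exists_bound_lipschitz_cutoffF hp3
  have hG : Continuous (cutoffF p) :=
    (LipschitzWith.of_dist_le_mul (K := K.toNNReal) fun u v => by
      rw [Real.dist_eq, Real.dist_eq, Real.coe_toNNReal _ hK.le]; exact hGl u v).continuous
  have hp2' : 0 < p - 2 := by linarith
  have hp3' : 0 < p - 3 := by linarith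
  set A : ℝ := K / (p - 2) / (p - 3) with hA
  have hApos : 0 < A := by positivity
  -- Any `R` with `A * r ^ (3 - p) ≤ 1/2` on `[R, ∞)` makes the map a contraction.
  obtain ⟨R, hR, hRA⟩ : ∃ R : ℝ, 0 < R ∧ ∀ r ∈ Ici R, A * r ^ (3 - p) ≤ 1 / 2 := by
    have h1 : Tendsto (fun r : ℝ => A * r ^ (3 - p)) atTop (nhds 0) := by
      simpa using (tendsto_rpow_neg_atTop hp3').const_mul A
    obtain ⟨R, hR⟩ := eventually_atTop.1 (h1.eventually_le_const (by norm_num : (0 : ℝ) < 1 / 2))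
    exact ⟨max R 1, by positivity, fun r hr => hR r (le_trans (le_max_left _ _) hr)⟩
  have key := fun (f : ℝ → ℝ) (hf : ContinuousOn f (Ici R)) =>
    double_tail_integral (g := fun t => -cutoffF p (f t)) (M := K) hR hp3
      (hG.comp_continuousOn hf).neg (fun t _ => by rw [abs_neg]; exact hGb _)
  -- The integral map, with values extended constantly to the left of `R`.
  have hT : ∀ f : BoundedContinuousFunction ℝ ℝ, ∃ g : BoundedContinuousFunction ℝ ℝ, ∀ r, g r =
      ∫ s in Ioi (max R r), ∫ t in Ioi s, -cutoffF p (f t) * t ^ (1 - p) := fun f => by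
    obtain ⟨-, -, -, -, b, d⟩ := key f f.continuous.continuousOn
    have hc : ContinuousOn (fun r => ∫ s in Ioi r, ∫ t in Ioi s, -cutoffF p (f t) * t ^ (1 - p))
      (Ici R) := fun r hr => (d r hr).continuousWithinAt
    exact ⟨BoundedContinuousFunction.ofNormedAddCommGroup
      (fun r => ∫ s in Ioi (max R r), ∫ t in Ioi s, -cutoffF p (f t) * t ^ (1 - p))
      (hc.comp_continuous (by fun_prop) fun r => le_max_left R r) (1 / 2)
      fun r => (b _ (le_max_left R r)).trans (hRA _ (le_max_left R r)), fun r => rfl⟩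
  choose T hT using hT
  have hcontr : ContractingWith (1 / 2) T := by
    refine ⟨by norm_num, LipschitzWith.of_dist_le_mul fun f g => ?_⟩
    refine (BoundedContinuousFunction.dist_le (by positivity)).2 fun r => ?_
    have hr : max R r ∈ Ici R := le_max_left R r
    obtain ⟨i1, -, -, i2, -, -⟩ := key f f.continuous.continuousOn
    obtain ⟨j1, -, -, j2, -, -⟩ := key g g.continuous.continuousOn
    obtain ⟨-, -, -, -, b, -⟩ := double_tail_integral
      (g := fun t => -cutoffF p (f t) - -cutoffF p (g t)) (M := K * dist f g) hR hp3
      ((hG.comp f.continuous).neg.sub (hG.comp g.continuous).neg).continuousOn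
      (fun t _ => by
        rw [neg_sub_neg, abs_sub_comm]
        refine (hGl _ _).trans (mul_le_mul_of_nonneg_left ?_ hK.le)
        rw [← Real.dist_eq]
        exact BoundedContinuousFunction.dist_coe_le_dist t)
    have hsub : T f r - T g r = ∫ s in Ioi (max R r), ∫ t in Ioi s,
        (-cutoffF p (f t) - -cutoffF p (g t)) * t ^ (1 - p) := by
      rw [hT, hT, ← integral_sub (i2 _ hr) (j2 _ hr)]
      refine setIntegral_congr_fun measurableSet_Ioi fun s hs => ?_
      have hs' : s ∈ Ici R := Ioi_subset_Ici hr hs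
      simp only [sub_mul]
      exact (integral_sub (i1 s hs') (j1 s hs')).symm
    rw [Real.dist_eq, hsub]
    refine (b _ hr).trans ?_
    have h1 : K * dist f g / (p - 2) / (p - 3) * max R r ^ (3 - p)
        = (A * max R r ^ (3 - p)) * dist f g := by rw [hA]; ring
    rw [h1]
    simpa using mul_le_mul_of_nonneg_right (hRA _ hr) dist_nonneg
  set φ : BoundedContinuousFunction ℝ ℝ := hcontr.fixedPoint T
  have hfix : T φ = φ := hcontr.fixedPoint_isFixedPt
  obtain ⟨i1, b1, d1, i2, b2, d2⟩ := key φ φ.continuous.continuousOn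
  have hφ : ∀ r ∈ Ici R, φ r = ∫ s in Ioi r, ∫ t in Ioi s, -cutoffF p (φ t) * t ^ (1 - p) :=
    fun r hr => by
      conv_lhs => rw [← hfix]
      rw [hT, max_eq_right (show R ≤ r from hr)]
  have hφb : ∀ r ∈ Ici R, |φ r| ≤ A * r ^ (3 - p) := fun r hr => by
    rw [hφ r hr]; exact b2 r hr
  have hφm : ∀ r ∈ Ici R, φ r ∈ Icc (-1 : ℝ) 1 := fun r hr =>
    abs_le.1 (by linarith [hφb r hr, hRA r hr])
  -- On `[-1, 1]`-valued functions the cut-off is invisible to the integral map.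
  have hcut : ∀ f : ℝ → ℝ, (∀ r ∈ Ici R, f r ∈ Icc (-1 : ℝ) 1) → ∀ r ∈ Ici R,
      (∫ s in Ioi r, ∫ t in Ioi s, -(|f t + 1| ^ (p - 1) * (f t + 1)) * t ^ (1 - p))
        = ∫ s in Ioi r, ∫ t in Ioi s, -cutoffF p (f t) * t ^ (1 - p) := fun f hf r hr => by
    refine setIntegral_congr_fun measurableSet_Ioi fun s hs => ?_
    refine setIntegral_congr_fun measurableSet_Ioi fun t ht => ?_
    have ht' : t ∈ Ici R := Ioi_subset_Ici hr (Ioi_subset_Ioi (le_of_lt hs) ht)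
    simp only [cutoffF_of_mem (hf t ht')]
  have hdecay : ∀ (f : ℝ → ℝ) (B c : ℝ), 0 < c → (∀ r ∈ Ici R, |f r| ≤ B * r ^ (-c)) →
      Tendsto f atTop (nhds 0) := fun f B c hc hf => by
    refine squeeze_zero_norm' (a := fun r => B * r ^ (-c))
      ((eventually_ge_atTop R).mono fun r hr => hf r hr) ?_
    simpa using (tendsto_rpow_neg_atTop hc).const_mul B
  have hφdb : ∀ r ∈ Ici R, |-∫ t in Ioi r, -cutoffF p (φ t) * t ^ (1 - p)|
      ≤ K / (p - 2) * r ^ (2 - p) := fun r hr => by rw [abs_neg]; exact b1 r hr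
  refine ⟨R, A + K / (p - 2), hR, by positivity, φ,
    fun r => -∫ t in Ioi r, -cutoffF p (φ t) * t ^ (1 - p),
    fun r => -cutoffF p (φ r) * r ^ (1 - p),
    φ.continuous.continuousOn, hφm, ?_, ?_, ?_, ?_, ?_, ?_, ?_, ?_, ?_, ?_⟩
  · exact hdecay φ A (p - 3) hp3' fun r hr => by rw [neg_sub]; exact hφb r hr
  · intro r hr
    rw [hcut φ hφm r hr]
    exact hφ r hr
  · intro ψ hψc hψm _ hψ r hr
    -- The constant extension of `ψ` is a fixed point of `T`.
    let Ψ : BoundedContinuousFunction ℝ ℝ := BoundedContinuousFunction.ofNormedAddCommGroup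
      (fun r => ψ (max R r)) (hψc.comp_continuous (by fun_prop) fun r => le_max_left R r) 1
      fun r => abs_le.2 (hψm _ (le_max_left R r))
    have hΨ : ∀ t ∈ Ici R, Ψ t = ψ t := fun t ht =>
      congrArg ψ (max_eq_right (show R ≤ t from ht))
    have hΨfix : T Ψ = Ψ := by
      ext x
      have hx : max R x ∈ Ici R := le_max_left R x
      rw [hT, ← hcut Ψ (fun t ht => by rw [hΨ t ht]; exact hψm t ht) _ hx]
      change _ = ψ (max R x)
      rw [hψ _ hx]
      refine setIntegral_congr_fun measurableSet_Ioi fun s hs => ?_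
      refine setIntegral_congr_fun measurableSet_Ioi fun t ht => ?_
      have ht' : t ∈ Ici R := Ioi_subset_Ici hx (Ioi_subset_Ioi (le_of_lt hs) ht)
      simp only [hΨ t ht']
    rw [← hΨ r hr, hcontr.fixedPoint_unique hΨfix]
  · exact fun r hr => (d2 r hr).congr hφ (hφ r hr)
  · exact fun r hr => by simpa only [neg_neg] using (d1 r hr).fun_neg
  · exact (hG.comp φ.continuous).neg.continuousOn.mul
      (continuousOn_id.rpow_const fun t ht => Or.inl (hR.trans_le ht).ne')
  · intro r hr
    beta_reduce
    rw [cutoffF_of_mem (hφm r hr), div_eq_mul_inv, ← Real.rpow_neg (hR.trans_le hr).le, neg_sub]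
  · intro r hr
    have h0 : 0 ≤ r ^ (3 - p) := Real.rpow_nonneg (hR.trans_le hr).le _
    exact (hφb r hr).trans (mul_le_mul_of_nonneg_right (by linarith [div_pos hK hp2']) h0)
  · intro r hr
    have h0 : 0 ≤ r ^ (2 - p) := Real.rpow_nonneg (hR.trans_le hr).le _
    exact (hφdb r hr).trans (mul_le_mul_of_nonneg_right (by linarith) h0)
  · exact hdecay _ (K / (p - 2)) (p - 2) hp2' fun r hr => by rw [neg_sub]; exact hφdb r hr
end

section
/- Let 3 < p < 5. There exist a twice continuously differentiable function y : (0,∞) → ℝ and constants C, R₀ > 0 such that: (i) y''(r) + (2/r)·y'(r) + |y(r)|^{p-1}·y(r) = 0 for all r > 0; (ii) y(r) > 0 for all r > 0; (iii) |y(r) − 1/r| ≤ C·r^{-(p-2)} and |y'(r)| ≤ C·r^{-2} for all r ≥ R₀; (iv) r^{2/(p-1)}·y(r) does not converge to 0 as r → 0⁺. -/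
/-!
Writing `y(r) = u(r) / r`, the equation becomes `u'' = -r^{1-p} |u|^{p-1} u`, and the required
decay means `u → 1` at infinity. In the variable `x = log r`, with `U(x) = u(eˣ)`, this reads
`U'' - U' + e^{-(p-3)x} |U|^{p-1} U = 0`, and with `U(∞) = 1` it is equivalent to the Volterra
equation from infinity
`U(x) = 1 - ∫_x^∞ (1 - e^{x-ξ}) e^{-(p-3)ξ} |U|^{p-1} U dξ`,
whose kernel is integrable because `p > 3`.

*Existence.* The nonlinearity is replaced by the bounded Lipschitz function
`g(u) = (max 0 (min u 1))^p`. The integral operator is then a contraction on bounded continuous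
functions on all of `ℝ` for a weighted sup norm (`exists_volterra`), so a global solution exists.
Since `g ≥ 0`, this solution is nondecreasing and at most `1`, so the upper truncation is inactive;
the decay estimates are read off from the integrals (`exists_log_profile`).

*Positivity and singularity.* With `d = (p-3)/(p-1) < 1/2`, the Emden–Fowler function
`w(x) = e^{-dx} U(x) = r^{2/(p-1)} y(r)` solves
`w'' - (1-2d) w' - d(1-d) w + (max w 0)^p = 0`. Its energy
`w'²/2 - d(1-d) w²/2 + (max w 0)^{p+1}/(p+1)` has derivative `(1-2d) w'² ≥ 0` and tends to `0`
at `+∞`, hence is negative everywhere (`energy_neg`). At a zero of `w` it would be nonnegative, so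
`U` never vanishes and is positive (`pos_of_energy_neg`). As `x → -∞` the energy stays below its
value at `0`, so `w²` is bounded below there (`energy_ge`), which is the singularity at the origin.
-/

open Set Filter
open MeasureTheory Topology Real

/-! ### Exponentially weighted tail integrals -/

/-- The tail integral `∫_x^∞ e^{-cξ} h(ξ) dξ`. -/
noncomputable def tailInt (h : ℝ → ℝ) (c x : ℝ) : ℝ := ∫ ξ in Ioi x, exp (-c * ξ) * h ξ

section tail
variable {h : ℝ → ℝ} {c : ℝ}

lemma tail_integrable (hc : 0 < c) (hh : Continuous h) (hb : ∀ x, |h x| ≤ 1) (x : ℝ) :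
    IntegrableOn (fun ξ => exp (-c * ξ) * h ξ) (Ioi x) := by
  refine Integrable.mono' (integrableOn_exp_mul_Ioi (a := -c) (by linarith) x)
    (by fun_prop) (.of_forall fun ξ => ?_)
  rw [norm_mul, Real.norm_eq_abs, Real.norm_eq_abs, abs_exp]
  exact mul_le_of_le_one_right (exp_pos _).le (hb ξ)

lemma tail_hasDerivAt (hc : 0 < c) (hh : Continuous h) (hb : ∀ x, |h x| ≤ 1) (x : ℝ) :
    HasDerivAt (tailInt h c) (-(exp (-c * x) * h x)) x := by
  have e : tailInt h c =
      fun x => tailInt h c 0 - ∫ ξ in (0:ℝ)..x, exp (-c * ξ) * h ξ := by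
    funext x
    rw [tailInt, tailInt, ← intervalIntegral.integral_Ioi_sub_Ioi' (tail_integrable hc hh hb 0)
      (tail_integrable hc hh hb x)]
    ring
  have hcont : Continuous fun ξ => exp (-c * ξ) * h ξ := by fun_prop
  rw [e]
  exact (hcont.integral_hasStrictDerivAt 0 x).hasDerivAt.const_sub _

lemma tail_abs_le (hc : 0 < c) (hb : ∀ x, |h x| ≤ 1) (x : ℝ) :
    |tailInt h c x| ≤ exp (-c * x) / c := by
  have := norm_integral_le_of_norm_le (integrableOn_exp_mul_Ioi (a := -c) (by linarith) x)
    (f := fun ξ => exp (-c * ξ) * h ξ) (.of_forall fun ξ => by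
      rw [norm_mul, Real.norm_eq_abs, Real.norm_eq_abs, abs_exp]
      exact mul_le_of_le_one_right (exp_pos _).le (hb ξ))
  rw [integral_exp_mul_Ioi (by linarith), neg_div_neg_eq] at this
  exact this

lemma tail_nonneg (h0 : ∀ x, 0 ≤ h x) (x : ℝ) : 0 ≤ tailInt h c x :=
  setIntegral_nonneg measurableSet_Ioi fun ξ _ => mul_nonneg (exp_pos _).le (h0 ξ)

lemma exp_mul_tail_le (hc : 0 < c) (hb : ∀ x, |h x| ≤ 1) (x : ℝ) :
    |exp x * tailInt h (c + 1) x| ≤ exp (-c * x) / c := by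
  rw [abs_mul, abs_exp]
  calc exp x * |tailInt h (c + 1) x| ≤ exp x * (exp (-(c + 1) * x) / (c + 1)) := by
        gcongr; exact tail_abs_le (by linarith) hb x
    _ = exp (-c * x) / (c + 1) := by
        rw [← mul_div_assoc, ← Real.exp_add]; ring_nf
    _ ≤ exp (-c * x) / c := by gcongr; linarith
end tail

/-! ### The truncated nonlinearity -/

/-- The power `u ↦ u ^ p` on `[0, 1]`, extended by `0` to the left and by `1` to the right. -/
noncomputable def clampPow (p u : ℝ) : ℝ := (max 0 (min u 1)) ^ p

section clamp
variable {p : ℝ}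

lemma clampPow_nonneg (p u : ℝ) : 0 ≤ clampPow p u := rpow_nonneg (le_max_left _ _) _

lemma clampPow_abs_le (hp : 0 ≤ p) (u : ℝ) : |clampPow p u| ≤ 1 := by
  rw [abs_of_nonneg (clampPow_nonneg p u)]
  exact rpow_le_one (le_max_left _ _) (max_le zero_le_one (min_le_right _ _)) hp

lemma clampPow_continuous (hp : 0 ≤ p) : Continuous (clampPow p) := by
  unfold clampPow
  exact (by fun_prop : Continuous fun u : ℝ => max 0 (min u 1)).rpow_const fun _ => Or.inr hp

lemma clampPow_lipschitz (hp : 1 ≤ p) (u v : ℝ) :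
    |clampPow p u - clampPow p v| ≤ p * |u - v| := by
  have key : ∀ a ∈ Icc (0:ℝ) 1, ∀ b ∈ Icc (0:ℝ) 1, ‖b ^ p - a ^ p‖ ≤ p * ‖b - a‖ := by
    intro a ha b hb
    refine (convex_Icc (0:ℝ) 1).norm_image_sub_le_of_norm_hasDerivWithin_le
      (f := fun x => x ^ p) (f' := fun x => p * x ^ (p - 1))
      (fun x _ => (hasDerivAt_rpow_const (Or.inr hp)).hasDerivWithinAt) (fun x hx => ?_) ha hb
    rw [norm_mul, Real.norm_eq_abs, Real.norm_eq_abs, abs_of_nonneg (rpow_nonneg hx.1 _),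
      abs_of_nonneg (by linarith)]
    exact mul_le_of_le_one_right (by linarith) (rpow_le_one hx.1 hx.2 (by linarith))
  have hm : ∀ t : ℝ, max 0 (min t 1) ∈ Icc (0:ℝ) 1 := fun t =>
    ⟨le_max_left _ _, max_le zero_le_one (min_le_right _ _)⟩
  refine (key _ (hm v) _ (hm u)).trans ?_
  gcongr
  rw [Real.norm_eq_abs]
  refine (abs_max_sub_max_le_max _ _ _ _).trans ?_
  refine max_le (by simp) ((abs_min_sub_min_le_max _ _ _ _).trans (max_le le_rfl (by simp)))
end clamp

/-! ### The Volterra equation from infinity -/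

/-- The weight `exp (k e^{-cξ} / c)` reproduces itself under integration against `k e^{-cξ}`. This
is what makes the Volterra operator contracting in the corresponding weighted norm. -/
lemma weight_integral {c k : ℝ} (hc : 0 < c) (hk : 0 ≤ k) (x : ℝ) :
    IntegrableOn (fun ξ => k * exp (-c * ξ) * exp (k * (exp (-c * ξ) / c))) (Ioi x) ∧
    ∫ ξ in Ioi x, k * exp (-c * ξ) * exp (k * (exp (-c * ξ) / c))
      = exp (k * (exp (-c * x) / c)) - 1 := by
  have hd : ∀ ξ ∈ Ici x, HasDerivAt (fun ξ => -exp (k * (exp (-c * ξ) / c)))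
      (k * exp (-c * ξ) * exp (k * (exp (-c * ξ) / c))) ξ := by
    intro ξ _
    have h1 : HasDerivAt (fun ξ : ℝ => -c * ξ) (-c) ξ := by
      simpa using (hasDerivAt_id ξ).const_mul (-c)
    refine (((h1.exp.div_const c).const_mul k).exp).fun_neg.congr_deriv ?_
    field_simp
  have ht : Tendsto (fun ξ => -exp (k * (exp (-c * ξ) / c))) atTop (𝓝 (-1)) := by
    have h1 : Tendsto (fun ξ : ℝ => exp (-c * ξ)) atTop (𝓝 0) :=
      tendsto_exp_atBot.comp (tendsto_id.const_mul_atTop_of_neg (by linarith))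
    have := ((continuous_exp.tendsto _).comp ((h1.div_const c).const_mul k)).neg
    simpa using this
  have hi := integrableOn_Ioi_deriv_of_nonneg' hd (fun ξ _ => by positivity) ht
  refine ⟨hi, ?_⟩
  rw [integral_Ioi_of_hasDerivAt_of_tendsto' hd hi ht]
  ring

/-- Lipschitz estimate for `h ↦ ∫_x^∞ (1 - e^{x-ξ}) e^{-cξ} h(ξ) dξ`, the kernel being split into
two tail integrals. -/
lemma volterra_sub_le {c k D : ℝ} {h₁ h₂ : ℝ → ℝ} (hc : 0 < c) (hk : 0 ≤ k)
    (hh₁ : Continuous h₁) (hb₁ : ∀ x, |h₁ x| ≤ 1) (hh₂ : Continuous h₂) (hb₂ : ∀ x, |h₂ x| ≤ 1)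
    (hD : ∀ ξ, |h₁ ξ - h₂ ξ| ≤ k * exp (k * (exp (-c * ξ) / c)) * D) (x : ℝ) :
    |(tailInt h₁ c x - exp x * tailInt h₁ (c + 1) x)
      - (tailInt h₂ c x - exp x * tailInt h₂ (c + 1) x)|
      ≤ (exp (k * (exp (-c * x) / c)) - 1) * D := by
  have hc1 : 0 < c + 1 := by linarith
  have i1 := tail_integrable hc hh₁ hb₁ x
  have i2 := tail_integrable hc hh₂ hb₂ x
  have j1 := (tail_integrable hc1 hh₁ hb₁ x).const_mul (exp x)
  have j2 := (tail_integrable hc1 hh₂ hb₂ x).const_mul (exp x)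
  have k1 : Integrable (fun ξ => exp (-c * ξ) * h₁ ξ - exp x * (exp (-(c + 1) * ξ) * h₁ ξ))
      (volume.restrict (Ioi x)) := i1.sub j1
  have k2 : Integrable (fun ξ => exp (-c * ξ) * h₂ ξ - exp x * (exp (-(c + 1) * ξ) * h₂ ξ))
      (volume.restrict (Ioi x)) := i2.sub j2
  obtain ⟨wi, we⟩ := weight_integral hc hk x
  unfold tailInt
  rw [← integral_const_mul, ← integral_const_mul, ← integral_sub i1 j1, ← integral_sub i2 j2,
    ← integral_sub k1 k2, ← we, ← integral_mul_const]
  rw [← Real.norm_eq_abs]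
  refine norm_integral_le_of_norm_le (wi.mul_const D) ?_
  filter_upwards [ae_restrict_mem measurableSet_Ioi] with ξ hξ
  have hξ' : x < ξ := hξ
  have e1 : exp x * exp (-(c + 1) * ξ) = exp (-c * ξ) * exp (x - ξ) := by
    rw [← Real.exp_add, ← Real.exp_add]; ring_nf
  have e2 : exp (-c * ξ) * h₁ ξ - exp x * (exp (-(c + 1) * ξ) * h₁ ξ)
      - (exp (-c * ξ) * h₂ ξ - exp x * (exp (-(c + 1) * ξ) * h₂ ξ))
      = exp (-c * ξ) * ((1 - exp (x - ξ)) * (h₁ ξ - h₂ ξ)) := by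
    linear_combination (h₂ ξ - h₁ ξ) * e1
  have e3 : |1 - exp (x - ξ)| ≤ 1 := by
    have : exp (x - ξ) ≤ 1 := exp_le_one_iff.mpr (by linarith)
    rw [abs_of_nonneg (by linarith)]
    linarith [exp_pos (x - ξ)]
  rw [e2, Real.norm_eq_abs, abs_mul, abs_exp, abs_mul]
  calc exp (-c * ξ) * (|1 - exp (x - ξ)| * |h₁ ξ - h₂ ξ|)
      ≤ exp (-c * ξ) * (1 * (k * exp (k * (exp (-c * ξ) / c)) * D)) := by
        gcongr; exact hD ξ
    _ = _ := by ring

/-- Global solvability of the truncated Volterra equation, by the contraction principle for the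
unknown `U / W` with `W = exp (2p e^{-cx} / c)`. -/
lemma exists_volterra {c p : ℝ} (hc : 0 < c) (hp : 1 ≤ p) :
    ∃ U : ℝ → ℝ, Continuous U ∧ ∀ x, U x = 1 - (tailInt (clampPow p ∘ U) c x
      - exp x * tailInt (clampPow p ∘ U) (c + 1) x) := by
  have hp0 : 0 ≤ p := by linarith
  have hc1 : 0 < c + 1 := by linarith
  set W : ℝ → ℝ := fun x => exp (2 * p * (exp (-c * x) / c)) with hW
  have hWc : Continuous W := by fun_prop
  have hW0 : ∀ x, 0 < W x := fun x => exp_pos _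
  have hW1 : ∀ x, 1 + 2 * (exp (-c * x) / c) ≤ W x := fun x => by
    have h1 := add_one_le_exp (2 * p * (exp (-c * x) / c))
    have h2 : 0 ≤ exp (-c * x) / c := by positivity
    have : W x = exp (2 * p * (exp (-c * x) / c)) := rfl
    nlinarith
  let F : BoundedContinuousFunction ℝ ℝ → ℝ → ℝ := fun φ => clampPow p ∘ fun x => W x * φ x
  have hFc : ∀ φ, Continuous (F φ) := fun φ =>
    (clampPow_continuous hp0).comp (hWc.mul φ.continuous)
  have hFb : ∀ φ x, |F φ x| ≤ 1 := fun φ x => clampPow_abs_le hp0 _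
  let T : BoundedContinuousFunction ℝ ℝ → BoundedContinuousFunction ℝ ℝ := fun φ =>
    BoundedContinuousFunction.ofNormedAddCommGroup
      (fun x => (W x)⁻¹ * (1 - (tailInt (F φ) c x - exp x * tailInt (F φ) (c + 1) x)))
      (by
        have a1 : Continuous (tailInt (F φ) c) := continuous_iff_continuousAt.2 fun x =>
          (tail_hasDerivAt hc (hFc φ) (hFb φ) x).continuousAt
        have a2 : Continuous (tailInt (F φ) (c + 1)) := continuous_iff_continuousAt.2 fun x =>
          (tail_hasDerivAt hc1 (hFc φ) (hFb φ) x).continuousAt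
        have a3 : Continuous fun x => (W x)⁻¹ := hWc.inv₀ fun x => (hW0 x).ne'
        fun_prop) 1
      (fun x => by
        have b1 := abs_le.1 (tail_abs_le hc (hFb φ) x)
        have b2 := abs_le.1 (exp_mul_tail_le hc (hFb φ) x)
        rw [norm_mul, norm_inv, Real.norm_eq_abs, Real.norm_eq_abs, abs_of_pos (hW0 x),
          inv_mul_le_iff₀ (hW0 x), mul_one]
        refine le_trans ?_ (hW1 x)
        rw [abs_le]
        constructor <;> linarith [b1.1, b1.2, b2.1, b2.2])
  have hT : ContractingWith (1 / 2) T := by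
    refine ⟨by rw [← NNReal.coe_lt_coe]; norm_num, LipschitzWith.of_dist_le_mul fun φ ψ => ?_⟩
    refine (BoundedContinuousFunction.dist_le (by positivity)).2 fun x => ?_
    have hD : ∀ ξ, |F φ ξ - F ψ ξ| ≤
        2 * p * exp (2 * p * (exp (-c * ξ) / c)) * (dist φ ψ / 2) := fun ξ => by
      refine (clampPow_lipschitz hp _ _).trans ?_
      have h1 : |φ ξ - ψ ξ| ≤ dist φ ψ := by
        rw [← Real.dist_eq]; exact BoundedContinuousFunction.dist_coe_le_dist ξ
      rw [← mul_sub, abs_mul, abs_of_pos (hW0 ξ)]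
      calc p * (W ξ * |φ ξ - ψ ξ|) ≤ p * (W ξ * dist φ ψ) := by
            have := (hW0 ξ).le
            gcongr
        _ = _ := by simp only [hW]; ring
    have := volterra_sub_le hc (by positivity) (hFc φ) (hFb φ) (hFc ψ) (hFb ψ) hD x
    change |(W x)⁻¹ * _ - (W x)⁻¹ * _| ≤ _
    rw [← mul_sub, abs_mul, abs_inv, abs_of_pos (hW0 x), inv_mul_le_iff₀ (hW0 x), abs_sub_comm,
      sub_sub_sub_cancel_left, abs_sub_comm, abs_sub_comm]
    refine this.trans ?_
    have hd : 0 ≤ dist φ ψ := dist_nonneg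
    have : ((1 / 2 : NNReal) : ℝ) = 1 / 2 := by norm_num
    rw [this]
    change (W x - 1) * _ ≤ _
    nlinarith
  obtain hfix : T (hT.fixedPoint T) = hT.fixedPoint T := hT.fixedPoint_isFixedPt
  set φ := hT.fixedPoint T
  refine ⟨fun x => W x * φ x, hWc.mul φ.continuous, fun x => ?_⟩
  have := congrArg (fun f : BoundedContinuousFunction ℝ ℝ => W x * f x) hfix
  change W x * ((W x)⁻¹ * _) = _ at this
  rw [mul_inv_cancel_left₀ (hW0 x).ne'] at this
  exact this.symm

/-! ### The energy -/

lemma hasDerivAt_posPart_rpow {q : ℝ} (hq : 1 < q) (u : ℝ) :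
    HasDerivAt (fun u : ℝ => (max u 0) ^ q) (q * (max u 0) ^ (q - 1)) u := by
  have hne : ∀ v : ℝ, v ≠ 0 →
      HasDerivAt (fun u : ℝ => (max u 0) ^ q) (q * (max v 0) ^ (q - 1)) v := by
    intro v hv
    rcases hv.lt_or_gt with h | h
    · rw [max_eq_right h.le, zero_rpow (by linarith), mul_zero]
      refine (hasDerivAt_const v (0:ℝ)).congr_of_eventuallyEq ?_
      filter_upwards [Iio_mem_nhds h] with w hw
      rw [max_eq_right (le_of_lt hw), zero_rpow (by linarith)]
    · rw [max_eq_left h.le]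
      refine (hasDerivAt_rpow_const (Or.inl h.ne')).congr_of_eventuallyEq ?_
      filter_upwards [Ioi_mem_nhds h] with w hw
      rw [max_eq_left (le_of_lt hw)]
  by_cases hu : u = 0
  · subst hu
    have hm : Continuous fun u : ℝ => max u 0 := by fun_prop
    exact hasDerivAt_of_hasDerivAt_of_ne (g := fun v => q * (max v 0) ^ (q - 1)) hne
      (hm.rpow_const fun _ => Or.inr (by linarith)).continuousAt
      ((hm.rpow_const fun _ => Or.inr (by linarith)).const_mul q).continuousAt
  · exact hne u hu

/-- The Emden–Fowler energy `w'²/2 - d(1-d) w²/2 + (max w 0)^{p+1}/(p+1)` of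
`w(x) = e^{-dx} U(x)`, written in terms of `U` and `V = U'`. -/
noncomputable def energy (p d : ℝ) (U V : ℝ → ℝ) (x : ℝ) : ℝ :=
  exp (-(2 * d) * x) * ((V x - d * U x) ^ 2 / 2 - d * (1 - d) * U x ^ 2 / 2)
    + exp (-(d * (p + 1)) * x) * ((max (U x) 0) ^ (p + 1) / (p + 1))

section energy
variable {p d : ℝ} {U V : ℝ → ℝ}

/-- The energy has derivative `(1 - 2d) w'²`. The exponent `d (p - 1)` in the equation for `V` is
the one that makes the equation for `w` autonomous. -/
lemma energy_hasDerivAt (hp : 0 < p)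
    (hU : ∀ x, HasDerivAt U (V x) x)
    (hV : ∀ x, HasDerivAt V (V x - exp (-(d * (p - 1)) * x) * (max (U x) 0) ^ p) x) (x : ℝ) :
    HasDerivAt (energy p d U V)
      ((1 - 2 * d) * exp (-(2 * d) * x) * (V x - d * U x) ^ 2) x := by
  have hexp : ∀ a : ℝ, HasDerivAt (fun x : ℝ => exp (a * x)) (exp (a * x) * a) x := fun a => by
    simpa using ((hasDerivAt_id x).const_mul a).exp
  have hG := (hasDerivAt_posPart_rpow (q := p + 1) (by linarith) (U x)).comp x (hU x)
  have h1 := (hexp (-(2 * d))).fun_mul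
    (((((hV x).fun_sub ((hU x).const_mul d)).fun_pow 2).div_const 2).fun_sub
      ((((hU x).fun_pow 2).const_mul (d * (1 - d))).div_const 2))
  have h2 := (hexp (-(d * (p + 1)))).fun_mul (hG.div_const (p + 1))
  refine (h1.fun_add h2).congr_deriv ?_
  have e1 : exp (-(d * (p + 1)) * x) = exp (-(2 * d) * x) * exp (-(d * (p - 1)) * x) := by
    rw [← Real.exp_add]; ring_nf
  have e2 : (max (U x) 0) ^ (p + 1) = U x * (max (U x) 0) ^ p := by
    rcases le_total (U x) 0 with h | h
    · rw [max_eq_right h, zero_rpow (by linarith), zero_rpow (by linarith), mul_zero]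
    · rw [max_eq_left h, rpow_add_one' h (by linarith), mul_comm]
  simp only [Function.comp_apply, e1, e2, add_sub_cancel_right]
  have hp1 : p + 1 ≠ 0 := by linarith
  field_simp
  ring

/-- The energy is nondecreasing with limit `0` at `+∞`, hence nonpositive. If it vanished somewhere,
it would vanish from there on, forcing `V = d U` near `+∞`, against `U → 1` and `V → 0`. -/
lemma energy_neg (hp : 1 < p) (hd : 0 < d) (hd2 : 2 * d < 1)
    (hU : ∀ x, HasDerivAt U (V x) x)
    (hV : ∀ x, HasDerivAt V (V x - exp (-(d * (p - 1)) * x) * (max (U x) 0) ^ p) x)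
    (hU1 : Tendsto U atTop (𝓝 1)) (hV0 : Tendsto V atTop (𝓝 0)) :
    Monotone (energy p d U V) ∧ ∀ x, energy p d U V x < 0 := by
  have hE := energy_hasDerivAt (p := p) (d := d) (by linarith) hU hV
  have hmono : Monotone (energy p d U V) := by
    refine monotone_of_deriv_nonneg (fun x => (hE x).differentiableAt) fun x => ?_
    rw [(hE x).deriv]
    have : 0 ≤ 1 - 2 * d := by linarith
    positivity
  have hlim : Tendsto (energy p d U V) atTop (𝓝 0) := by
    have hexp : ∀ a : ℝ, 0 < a → Tendsto (fun x : ℝ => exp (-a * x)) atTop (𝓝 0) := fun a ha =>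
      tendsto_exp_atBot.comp (tendsto_id.const_mul_atTop_of_neg (by linarith))
    have hG : Tendsto (fun x => (max (U x) 0) ^ (p + 1) / (p + 1)) atTop
        (𝓝 ((max 1 0) ^ (p + 1) / (p + 1))) :=
      ((hU1.max tendsto_const_nhds).rpow_const (Or.inr (by linarith))).div_const _
    have := ((hexp (2 * d) (by linarith)).mul
      (((((hV0.sub (hU1.const_mul d)).pow 2).div_const 2).sub
      (((hU1.pow 2).const_mul (d * (1 - d))).div_const 2)))).add
      ((hexp (d * (p + 1)) (by positivity)).mul hG)
    simp only [zero_mul, add_zero] at this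
    exact this
  have hle : ∀ x, energy p d U V x ≤ 0 := fun x => hmono.ge_of_tendsto hlim x
  refine ⟨hmono, fun x₀ => (hle x₀).lt_of_ne fun h0 => ?_⟩
  have hz : ∀ x, x₀ ≤ x → energy p d U V x = 0 := fun x hx =>
    le_antisymm (hle x) (h0 ▸ hmono hx)
  have hVU : ∀ᶠ x in atTop, V x - d * U x = 0 := by
    filter_upwards [eventually_gt_atTop x₀] with x hx
    have h1 : HasDerivAt (energy p d U V) 0 x :=
      (hasDerivAt_const x (0:ℝ)).congr_of_eventuallyEq <| by
        filter_upwards [Ioi_mem_nhds hx] with y hy using hz y (le_of_lt hy)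
    have h2 := (hE x).unique h1
    have h3 : (1 - 2 * d) * exp (-(2 * d) * x) ≠ 0 := by
      have : 0 < 1 - 2 * d := by linarith
      positivity
    exact pow_eq_zero_iff two_ne_zero |>.1 ((mul_eq_zero.1 h2).resolve_left h3)
  have h1 : Tendsto (fun x => V x - d * U x) atTop (𝓝 (0 - d * 1)) := hV0.sub (hU1.const_mul d)
  have h2 := tendsto_nhds_unique (h1.congr' hVU) tendsto_const_nhds
  linarith

lemma pos_of_energy_neg (hp : 0 < p) (hUc : Continuous U) (hU1 : Tendsto U atTop (𝓝 1))
    (hE : ∀ x, energy p d U V x < 0) (x : ℝ) : 0 < U x := by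
  have hne : ∀ y, U y ≠ 0 := fun y hy => by
    have h := hE y
    rw [energy, hy, max_self, zero_rpow (by linarith)] at h
    refine absurd h (not_lt.2 ?_)
    simp only [mul_zero, zero_div, add_zero, sub_zero, ne_eq, OfNat.ofNat_ne_zero,
      not_false_eq_true, zero_pow]
    positivity
  by_contra hx
  obtain ⟨y, hy, hxy⟩ := ((hU1.eventually_const_lt zero_lt_one).and
    (eventually_ge_atTop x)).exists
  obtain ⟨z, -, hz⟩ := intermediate_value_Icc hxy hUc.continuousOn ⟨not_lt.1 hx, hy.le⟩
  exact hne z hz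

lemma energy_ge (hp : 0 < p) (x : ℝ) :
    -(d * (1 - d) / 2) * (exp (-d * x) * U x) ^ 2 ≤ energy p d U V x := by
  have e : exp (-(2 * d) * x) = exp (-d * x) ^ 2 := by
    rw [← Real.exp_nat_mul]; push_cast; ring_nf
  have h1 : 0 ≤ exp (-(d * (p + 1)) * x) * ((max (U x) 0) ^ (p + 1) / (p + 1)) := by
    have := rpow_nonneg (le_max_right (U x) 0) (p + 1)
    positivity
  have h2 : 0 ≤ exp (-d * x) ^ 2 * ((V x - d * U x) ^ 2 / 2) := by positivity
  rw [energy, e]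
  linarith
end energy

/-! ### Construction of the solution -/

/-- The solution `U(x) = r y(r)`, `r = eˣ`, with `V = U'` and the decay estimates at infinity. Only
the truncation at negative values of `U` is still present. -/
lemma exists_log_profile {p : ℝ} (hp3 : 3 < p) :
    ∃ U V : ℝ → ℝ, (∀ x, HasDerivAt U (V x) x) ∧
      (∀ x, HasDerivAt V (V x - exp (-(p - 3) * x) * (max (U x) 0) ^ p) x) ∧
      (∀ x, |U x - 1| ≤ exp (-(p - 3) * x) / (p - 3)) ∧ (∀ x, U x ≤ 1) ∧
      (∀ x, 0 ≤ V x) ∧ (∀ x, V x ≤ exp (-(p - 3) * x) / (p - 3)) := by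
  have hc : 0 < p - 3 := by linarith
  have hc1 : 0 < p - 3 + 1 := by linarith
  have hp0 : 0 ≤ p := by linarith
  obtain ⟨U, hUc, hU⟩ := exists_volterra (p := p) hc (by linarith)
  set h : ℝ → ℝ := clampPow p ∘ U with hh
  have hhc : Continuous h := (clampPow_continuous hp0).comp hUc
  have hb : ∀ x, |h x| ≤ 1 := fun x => clampPow_abs_le hp0 _
  have h0 : ∀ x, 0 ≤ h x := fun x => clampPow_nonneg _ _
  set V : ℝ → ℝ := fun x => exp x * tailInt h (p - 3 + 1) x with hV
  have hV0 : ∀ x, 0 ≤ V x := fun x => mul_nonneg (exp_pos x).le (tail_nonneg h0 x)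
  have hVle : ∀ x, |V x| ≤ exp (-(p - 3) * x) / (p - 3) := exp_mul_tail_le hc hb
  have hee : ∀ x : ℝ, exp x * exp (-(p - 3 + 1) * x) = exp (-(p - 3) * x) := fun x => by
    rw [← Real.exp_add]; ring_nf
  have hVd : ∀ x, HasDerivAt V (V x - exp (-(p - 3) * x) * h x) x := fun x => by
    refine ((Real.hasDerivAt_exp x).fun_mul (tail_hasDerivAt hc1 hhc hb x)).congr_deriv ?_
    rw [← hee x]
    simp only [hV]
    ring
  have hUd : ∀ x, HasDerivAt U (V x) x := fun x => by
    have := ((tail_hasDerivAt hc hhc hb x).fun_sub (hVd x)).const_sub 1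
    rw [funext hU]
    refine this.congr_deriv ?_
    ring
  have hUeq : ∀ x, U x = 1 - tailInt h (p - 3) x + V x := fun x => by
    rw [hU x]; simp only [hV]; ring
  have hAlim := fun x => tail_abs_le hc hb x
  have hmono : Monotone U := monotone_of_deriv_nonneg (fun x => (hUd x).differentiableAt)
    fun x => by rw [(hUd x).deriv]; exact hV0 x
  have hexp : Tendsto (fun x : ℝ => exp (-(p - 3) * x) / (p - 3)) atTop (𝓝 0) := by
    have : Tendsto (fun x : ℝ => exp (-(p - 3) * x)) atTop (𝓝 0) :=
      tendsto_exp_atBot.comp (tendsto_id.const_mul_atTop_of_neg (by linarith))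
    simpa using this.div_const (p - 3)
  have hU1 : Tendsto U atTop (𝓝 1) := by
    have a : Tendsto (tailInt h (p - 3)) atTop (𝓝 0) := squeeze_zero_norm hAlim hexp
    have b : Tendsto V atTop (𝓝 0) := squeeze_zero_norm hVle hexp
    have := (a.const_sub 1).add b
    rw [funext hUeq]
    simpa using this
  have hUle : ∀ x, U x ≤ 1 := fun x => hmono.ge_of_tendsto hU1 x
  refine ⟨U, V, hUd, fun x => ?_, fun x => ?_, hUle, hV0, fun x => (le_abs_self _).trans (hVle x)⟩
  · have : h x = (max (U x) 0) ^ p := by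
      simp only [hh, Function.comp_apply, clampPow, min_eq_left (hUle x), max_comm]
    rw [← this]
    exact hVd x
  · rw [abs_sub_comm, abs_of_nonneg (by linarith [hUle x])]
    have := (abs_le.1 (hAlim x)).2
    linarith [hUeq x, hV0 x]

/-- For `3 < p < 5` there exists a positive `C²` solution `y` on `(0,∞)` of the
radial soliton equation `y'' + (2/r) y' + |y|^{p-1} y = 0` with `|y(r) - 1/r| ≤ C r^{-(p-2)}`
and `|y'(r)| ≤ C r^{-2}` for large `r`, and such that `r^{2/(p-1)} y(r)` does not tend to
`0` as `r → 0⁺` (so the corresponding soliton has a genuine singularity at the origin). -/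
theorem singular_soliton_exists
    (p : ℝ) (hp3 : 3 < p) (hp5 : p < 5) :
    ∃ (y y' y'' : ℝ → ℝ) (C R₀ : ℝ), 0 < C ∧ 0 < R₀ ∧
      (∀ r ∈ Ioi (0:ℝ), HasDerivAt y (y' r) r) ∧
      (∀ r ∈ Ioi (0:ℝ), HasDerivAt y' (y'' r) r) ∧
      ContinuousOn y'' (Ioi 0) ∧
      (∀ r ∈ Ioi (0:ℝ),
        y'' r + (2 / r) * y' r + |y r| ^ (p - 1) * y r = 0) ∧
      (∀ r ∈ Ioi (0:ℝ), 0 < y r) ∧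
      (∀ r : ℝ, R₀ ≤ r → |y r - 1 / r| ≤ C * r ^ (-(p - 2))) ∧
      (∀ r : ℝ, R₀ ≤ r → |y' r| ≤ C * r ^ (-2 : ℝ)) ∧
      ¬ Tendsto (fun r => r ^ (2 / (p - 1)) * y r)
          (nhdsWithin 0 (Ioi 0)) (nhds 0) := by
  have hc : 0 < p - 3 := by linarith
  have hp1 : 0 < p - 1 := by linarith
  obtain ⟨U, V, hU, hV, hUb, hUle, hV0, hVle⟩ := exists_log_profile hp3
  have hexp : Tendsto (fun x : ℝ => exp (-(p - 3) * x) / (p - 3)) atTop (𝓝 0) := by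
    have : Tendsto (fun x : ℝ => exp (-(p - 3) * x)) atTop (𝓝 0) :=
      tendsto_exp_atBot.comp (tendsto_id.const_mul_atTop_of_neg (by linarith))
    simpa using this.div_const (p - 3)
  have hU1 : Tendsto U atTop (𝓝 1) :=
    tendsto_sub_nhds_zero_iff.1 (squeeze_zero_norm hUb hexp)
  have hVlim : Tendsto V atTop (𝓝 0) := squeeze_zero hV0 hVle hexp
  obtain ⟨d, hd⟩ : ∃ d, d = (p - 3) / (p - 1) := ⟨_, rfl⟩
  have hdp : d * (p - 1) = p - 3 := by rw [hd]; field_simp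
  have hd0 : 0 < d := by rw [hd]; positivity
  have hd2 : 2 * d < 1 := by nlinarith
  obtain ⟨hmono, hneg⟩ := energy_neg (p := p) (by linarith) hd0 hd2 hU
    (by rw [hdp]; exact hV) hU1 hVlim
  have hUc : Continuous U := continuous_iff_continuousAt.2 fun x => (hU x).continuousAt
  have hVc : Continuous V := continuous_iff_continuousAt.2 fun x => (hV x).continuousAt
  have hpos := pos_of_energy_neg (by linarith) hUc hU1 hneg
  have hlogexp : ∀ (a : ℝ) {r : ℝ}, 0 < r → exp (a * log r) = r ^ a := fun a r hr => by
    rw [rpow_def_of_pos hr, mul_comm]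
  have hy0 : ∀ r ∈ Ioi (0:ℝ), 0 < U (log r) / r := fun r hr => div_pos (hpos _) hr
  have hlog : ContinuousOn log (Ioi 0) := continuousOn_log.mono fun r hr => ne_of_gt hr
  have hUl := hUc.comp_continuousOn hlog
  have hVl := hVc.comp_continuousOn hlog
  have hid : ContinuousOn (fun r : ℝ => r) (Ioi 0) := continuousOn_id
  have hr0 : ∀ r ∈ Ioi (0:ℝ), r ≠ 0 := fun r hr => ne_of_gt hr
  refine ⟨fun r => U (log r) / r, fun r => (V (log r) - U (log r)) / r ^ 2,
    fun r => -((2 / r) * ((V (log r) - U (log r)) / r ^ 2)) -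
      |U (log r) / r| ^ (p - 1) * (U (log r) / r), 1 / (p - 3) + 2, 1, by positivity, one_pos,
    ?_, ?_, ?_, ?_, hy0, ?_, ?_, ?_⟩
  · intro r hr
    have hr : 0 < r := hr
    refine (((hU _).comp r (hasDerivAt_log hr.ne')).fun_div (hasDerivAt_id r) hr.ne').congr_deriv ?_
    simp only [Function.comp_apply, id]
    field_simp
  · intro r hr
    have hyr := hy0 r hr
    have hr : 0 < r := hr
    refine ((((hV _).comp r (hasDerivAt_log hr.ne')).fun_sub
      ((hU _).comp r (hasDerivAt_log hr.ne'))).fun_div ((hasDerivAt_id r).fun_pow 2)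
      (by simpa using hr.ne')).congr_deriv ?_
    have e1 : |U (log r) / r| ^ (p - 1) * (U (log r) / r) = (U (log r)) ^ p * r ^ (-p) := by
      rw [abs_of_pos hyr, ← rpow_add_one hyr.ne', sub_add_cancel,
        div_rpow (hpos _).le hr.le, rpow_neg hr.le, div_eq_mul_inv]
    have e2 : r ^ (-(p - 3)) = r ^ (-p) * r ^ 3 := by
      rw [← rpow_natCast r 3, ← rpow_add hr]; push_cast; ring_nf
    beta_reduce
    rw [e1]
    simp only [Function.comp_apply, id, max_eq_left (hpos _).le, hlogexp _ hr, e2]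
    field_simp
    ring
  · refine ContinuousOn.sub (ContinuousOn.neg (ContinuousOn.mul ?_ ?_)) (ContinuousOn.mul ?_ ?_)
    · exact continuousOn_const.div hid hr0
    · exact (hVl.sub hUl).div (hid.pow 2) fun r hr => pow_ne_zero 2 (hr0 r hr)
    · exact (hUl.div hid hr0).abs.rpow_const fun _ _ => Or.inr hp1.le
    · exact hUl.div hid hr0
  · intro r _
    ring
  · intro r hr
    have hr' : 0 < r := by linarith
    have h := hUb (log r)
    rw [hlogexp _ hr'] at h
    have e : r ^ (-(p - 2)) = r ^ (-(p - 3)) / r := by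
      rw [← rpow_sub_one hr'.ne']; ring_nf
    rw [← sub_div, abs_div, abs_of_pos hr', e, ← mul_div_assoc]
    gcongr
    have : 0 < r ^ (-(p - 3)) := rpow_pos_of_pos hr' _
    rw [div_eq_mul_one_div, mul_comm] at h
    linarith
  · intro r hr
    have hr' : 0 < r := by linarith
    have h := hVle (log r)
    rw [hlogexp _ hr'] at h
    have h1 : r ^ (-(p - 3)) ≤ 1 := rpow_le_one_of_one_le_of_nonpos hr (by linarith)
    have h2 : r ^ (-(p - 3)) / (p - 3) ≤ 1 / (p - 3) := by gcongr
    have e : r ^ (-2 : ℝ) = 1 / r ^ 2 := by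
      rw [rpow_neg hr'.le, one_div]; norm_cast
    rw [abs_div, abs_of_pos (by positivity : 0 < r ^ 2), e, mul_one_div]
    gcongr
    have := hV0 (log r)
    have := hpos (log r)
    have := hUle (log r)
    rw [abs_le]
    constructor <;> linarith
  · intro ht
    have hsq := ht.pow 2
    have h0 := hneg 0
    have hcoef : 0 < d * (1 - d) / 2 := by
      have : 0 < 1 - d := by linarith
      positivity
    have hsmall : ∀ᶠ r in 𝓝[>] (0:ℝ),
        (r ^ (2 / (p - 1)) * (U (log r) / r)) ^ 2 < -energy p d U V 0 / (d * (1 - d) / 2) := by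
      refine hsq.eventually_lt_const ?_
      rw [zero_pow two_ne_zero]
      exact div_pos (by linarith) hcoef
    obtain ⟨r, hr, hr0, hr1⟩ := (hsmall.and (Ioo_mem_nhdsGT one_pos)).exists
    have h1 := energy_ge (p := p) (d := d) (U := U) (V := V) (by linarith) (log r)
    have h2 := hmono (log_nonpos hr0.le hr1.le)
    have e : r ^ (2 / (p - 1)) * (U (log r) / r) = exp (-d * log r) * U (log r) := by
      rw [hlogexp _ hr0, mul_div_assoc', mul_div_right_comm, ← rpow_sub_one hr0.ne']
      congr 2
      rw [hd]
      field_simp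
      ring
    rw [e, lt_div_iff₀ hcoef] at hr
    linarith
end

section
/- Let 3 < p < 5 and θ = 2/(p−1). Suppose v : (0,∞) → ℝ is a twice continuously differentiable solution of r²v''(r) + (2(p−3)/(p−1))·r·v'(r) − (2(p−3)/(p−1)²)·v(r) + |v(r)|^{p-1}·v(r) = 0 on (0,∞), and suppose there exist C, R > 0 such that |v(r)| ≤ C·r^{θ-1} and |v'(r)| ≤ C·r^{θ-2} for all r ≥ R. Then for every r₀ > 0, if v(r₀) = 0 then also v'(r₀) = 0. (In particular a solution with these decay bounds that is not identically zero near any of its points never changes sign, which yields the positivity of the singular soliton W₀.) -/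
/-! The energy `Q(r) = (r v')²/2 - ((p-3)/(p-1)²) v² + |v|^{p+1}/(p+1)` satisfies, by the equation,
`Q'(r) = ((5-p)/(p-1)) r v'(r)² ≥ 0`. The decay bounds give `v → 0` and `r v' → 0` at infinity
(as `2/(p-1) - 1 < 0`), hence `Q → 0` there, and a nondecreasing function is bounded above by its
limit: `Q ≤ 0`. At a zero `r₀` of `v` this reads `(r₀ v'(r₀))²/2 ≤ 0`. -/

open Set Filter

/-- For `3 < p < 5` and `θ = 2/(p-1)`: a `C²` solution on `(0,∞)` of
`r² v'' + (2(p-3)/(p-1)) r v' - (2(p-3)/(p-1)²) v + |v|^{p-1} v = 0` satisfying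
`|v(r)| ≤ C r^{θ-1}` and `|v'(r)| ≤ C r^{θ-2}` for all `r ≥ R` has the property that
wherever `v` vanishes, so does `v'`. -/
theorem zero_of_v_implies_zero_of_deriv
    (p : ℝ) (hp3 : 3 < p) (hp5 : p < 5)
    (v v' v'' : ℝ → ℝ)
    (hv : ∀ r ∈ Ioi (0:ℝ), HasDerivAt v (v' r) r)
    (hv' : ∀ r ∈ Ioi (0:ℝ), HasDerivAt v' (v'' r) r)
    (hv'' : ContinuousOn v'' (Ioi 0))
    (hode : ∀ r ∈ Ioi (0:ℝ),
      r ^ 2 * v'' r + (2 * (p - 3) / (p - 1)) * r * v' r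
        - (2 * (p - 3) / (p - 1) ^ 2) * v r + |v r| ^ (p - 1) * v r = 0)
    (C R : ℝ) (hC : 0 < C) (hR : 0 < R)
    (hbound : ∀ r : ℝ, R ≤ r → |v r| ≤ C * r ^ (2 / (p - 1) - 1))
    (hbound' : ∀ r : ℝ, R ≤ r → |v' r| ≤ C * r ^ (2 / (p - 1) - 2)) :
    ∀ r₀ ∈ Ioi (0:ℝ), v r₀ = 0 → v' r₀ = 0 := by
  intro r₀ hr₀ hv0
  have hr₀' : (0:ℝ) < r₀ := hr₀
  have hp1 : 0 < p - 1 := by linarith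
  set Q : ℝ → ℝ := fun r =>
    (r * v' r) ^ 2 / 2 - (p - 3) / (p - 1) ^ 2 * v r ^ 2 + |v r| ^ (p + 1) / (p + 1) with hQ
  have hQd : ∀ r ∈ Ioi (0:ℝ), HasDerivAt Q ((5 - p) / (p - 1) * r * v' r ^ 2) r := by
    intro r hr
    have h1 := (((hasDerivAt_id r).mul (hv' r hr)).pow 2).div_const 2
    have h2 := ((hv r hr).pow 2).const_mul ((p - 3) / (p - 1) ^ 2)
    have h3 := ((hasDerivAt_abs_rpow (v r) (p := p + 1) (by linarith)).comp r
      (hv r hr)).div_const (p + 1)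
    refine ((h1.sub h2).add h3).congr_deriv ?_
    have e : p + 1 - 2 = p - 1 := by ring
    have hp1' : p - 1 ≠ 0 := hp1.ne'
    have hp2' : p + 1 ≠ 0 := by linarith
    have ho := hode r hr
    have h4 : (5 - p) / (p - 1) = 1 - 2 * (p - 3) / (p - 1) := by field_simp; ring
    have h5 : (p + 1) * |v r| ^ (p - 1) * v r * v' r / (p + 1)
        = |v r| ^ (p - 1) * v r * v' r := by field_simp
    rw [e, h5, h4]
    simp only [Pi.mul_apply, id]
    push_cast
    linear_combination v' r * ho
  have hmono : MonotoneOn Q (Ioi 0) := by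
    refine monotoneOn_of_hasDerivWithinAt_nonneg (convex_Ioi 0)
      (fun r hr => (hQd r hr).continuousAt.continuousWithinAt)
      (fun r hr => (hQd r (interior_subset hr)).hasDerivWithinAt) ?_
    intro r hr
    have hr' : (0:ℝ) < r := interior_subset hr
    have : 0 < 5 - p := by linarith
    positivity
  have hθ : 0 < -(2 / (p - 1) - 1) := by
    have : 2 / (p - 1) < 1 := by rw [div_lt_one hp1]; linarith
    linarith
  have hdecay : Tendsto (fun r : ℝ => C * r ^ (2 / (p - 1) - 1)) atTop (nhds 0) := by
    simpa using (tendsto_rpow_neg_atTop hθ).const_mul C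
  have hvlim : Tendsto v atTop (nhds 0) := by
    refine squeeze_zero_norm' ?_ hdecay
    filter_upwards [eventually_ge_atTop R] with r hr using hbound r hr
  have hv'lim : Tendsto (fun r => r * v' r) atTop (nhds 0) := by
    refine squeeze_zero_norm' ?_ hdecay
    filter_upwards [eventually_ge_atTop R] with r hr
    have hr0 : 0 < r := hR.trans_le hr
    have e : r ^ (2 / (p - 1) - 1) = r * r ^ (2 / (p - 1) - 2) := by
      rw [← Real.rpow_one_add' hr0.le (by linarith)]
      congr 1; ring
    rw [norm_mul, Real.norm_of_nonneg hr0.le, e]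
    calc r * ‖v' r‖ ≤ r * (C * r ^ (2 / (p - 1) - 2)) :=
          mul_le_mul_of_nonneg_left (hbound' r hr) hr0.le
      _ = _ := by ring
  have hQlim : Tendsto Q atTop (nhds 0) := by
    have h := (((hv'lim.pow 2).div_const 2).sub
      ((hvlim.pow 2).const_mul ((p - 3) / (p - 1) ^ 2))).add
      ((hvlim.abs.rpow_const (p := p + 1) (Or.inr (by linarith))).div_const (p + 1))
    have hp2' : p + 1 ≠ 0 := by linarith
    simpa [Real.zero_rpow hp2'] using h
  have hQ0 : Q r₀ ≤ 0 := by
    refine ge_of_tendsto hQlim ?_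
    filter_upwards [eventually_ge_atTop r₀] with r hr
    exact hmono hr₀ (hr₀'.trans_le hr) hr
  have hp2' : p + 1 ≠ 0 := by linarith
  simp only [hQ, hv0, abs_zero, Real.zero_rpow hp2', ne_eq, two_ne_zero, not_false_eq_true, zero_pow, mul_zero,
    sub_zero, zero_div, add_zero] at hQ0
  have hsq : (r₀ * v' r₀) ^ 2 = 0 := le_antisymm (by linarith) (sq_nonneg _)
  exact (mul_eq_zero.1 (pow_eq_zero_iff two_ne_zero |>.1 hsq)).resolve_left hr₀'.ne'
end

section
/- Let S : (0,∞) → [0,∞) be a function with S(A) → 0 as A → ∞. Suppose there exist α, β ∈ (0,1) and l, ω > 0 with l·α + β > 1, and constants C₀ > 0, A₁ > 0, such that S(A) ≤ C₀·( S(A^β)·S(A^α)^l + A^{-ω} ) for every A ≥ A₁. Then there exist constants C' > 0 and A₂ > 0 such that S(A) ≤ C'·A^{-ω} for every A ≥ A₂. -/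
/-!
In the variable `t = log A`, with `s t = S (exp t)`, the hypothesis reads
`s t ≤ C₀ (s (β t) s (α t) ^ l + exp (-ω t))`, and an exponential bound
`s t ≤ K exp (-κ t)` fed into the right-hand side returns the better rate `κ (l α + β)`,
capped at `ω`. Hence any positive rate improves to `ω` in finitely many steps
(`decay_improve`, `decay_full`).

It remains to find some positive rate (`decay_start`). Take `K` with `C₀ K ^ l = 1/2` and the
rate `κ = 1/R`, where `R` is so large that `s ≤ K exp (-(1/α + 1/β))` on `[R, ∞)`. If `α t ≤ R`
or `β t ≤ R`, then `κ t ≤ 1/α + 1/β` and smallness of `s` alone gives the bound at `t`; otherwise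
the recurrence transports the bound from `α t` and `β t` to `t`. Since the factors `α, β` are
bounded away from `1`, every `t` is reached after finitely many such steps.
-/

open Set Filter

/-- `s` decays at infinity at least at the exponential rate `κ`. -/
def ExpDecay (s : ℝ → ℝ) (κ : ℝ) : Prop :=
  ∃ C T : ℝ, 0 < C ∧ ∀ t, T ≤ t → s t ≤ C * Real.exp (-κ * t)

/-- The product term of the recurrence multiplies an exponential rate by `l α + β`. -/
lemma prod_bound {a b K κ α β l t : ℝ} (hb0 : 0 ≤ b) (hK : 0 < K) (hl : 0 < l)
    (ha : a ≤ K * Real.exp (-κ * (β * t))) (hb : b ≤ K * Real.exp (-κ * (α * t))) :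
    a * b ^ l ≤ K * K ^ l * Real.exp (-(κ * (l * α + β)) * t) := by
  have h1 : b ^ l ≤ K ^ l * Real.exp (-κ * (α * t) * l) := by
    rw [Real.exp_mul, ← Real.mul_rpow hK.le (Real.exp_pos _).le]
    exact Real.rpow_le_rpow hb0 hb hl.le
  calc a * b ^ l
      ≤ (K * Real.exp (-κ * (β * t))) * (K ^ l * Real.exp (-κ * (α * t) * l)) :=
        mul_le_mul ha h1 (Real.rpow_nonneg hb0 l) (by positivity)
    _ = K * K ^ l * (Real.exp (-κ * (β * t)) * Real.exp (-κ * (α * t) * l)) := by ring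
    _ = _ := by rw [← Real.exp_add]; congr 2; ring

/-- One pass through the recurrence upgrades the rate `κ` to anything up to
`min (κ (l α + β)) ω`. -/
lemma decay_improve {s : ℝ → ℝ} {α β l ω C₀ T₁ κ μ : ℝ} (hs0 : ∀ t, 0 ≤ s t)
    (hα : 0 < α) (hβ : 0 < β) (hl : 0 < l) (hC₀ : 0 < C₀)
    (hrec : ∀ t, T₁ ≤ t → s t ≤ C₀ * (s (β * t) * s (α * t) ^ l + Real.exp (-ω * t)))
    (hκ : ExpDecay s κ) (hμ : μ ≤ κ * (l * α + β)) (hμω : μ ≤ ω) : ExpDecay s μ := by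
  obtain ⟨C, T, hC, h⟩ := hκ
  have hCl : 0 < C ^ l := Real.rpow_pos_of_pos hC l
  refine ⟨C₀ * (C * C ^ l + 1), max (max T₁ 0) (max (T / α) (T / β)), by positivity, ?_⟩
  intro t ht
  simp only [max_le_iff] at ht
  obtain ⟨⟨ht1, ht0⟩, hta, htb⟩ := ht
  rw [div_le_iff₀' hα] at hta
  rw [div_le_iff₀' hβ] at htb
  have h1 := prod_bound (hs0 (α * t)) hC hl (h _ htb) (h _ hta)
  have h2 : Real.exp (-(κ * (l * α + β)) * t) ≤ Real.exp (-μ * t) :=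
    Real.exp_le_exp.2 (mul_le_mul_of_nonneg_right (by linarith) ht0)
  have h3 : Real.exp (-ω * t) ≤ Real.exp (-μ * t) :=
    Real.exp_le_exp.2 (mul_le_mul_of_nonneg_right (by linarith) ht0)
  calc s t ≤ C₀ * (s (β * t) * s (α * t) ^ l + Real.exp (-ω * t)) := hrec t ht1
    _ ≤ C₀ * (C * C ^ l * Real.exp (-μ * t) + Real.exp (-μ * t)) := by
        exact mul_le_mul_of_nonneg_left (add_le_add (h1.trans (by gcongr)) h3) hC₀.le
    _ = _ := by ring

/-- Mere convergence to `0` already forces some positive exponential rate. -/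
lemma decay_start {s : ℝ → ℝ} {α β l ω C₀ T₁ : ℝ} (hs0 : ∀ t, 0 ≤ s t)
    (hslim : Tendsto s atTop (nhds 0))
    (hα : α ∈ Ioo (0:ℝ) 1) (hβ : β ∈ Ioo (0:ℝ) 1) (hl : 0 < l) (hω : 0 < ω) (hC₀ : 0 < C₀)
    (hlαβ : 1 < l * α + β)
    (hrec : ∀ t, T₁ ≤ t → s t ≤ C₀ * (s (β * t) * s (α * t) ^ l + Real.exp (-ω * t))) :
    ∃ κ, 0 < κ ∧ ExpDecay s κ := by
  obtain ⟨hα0, hα1⟩ := hα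
  obtain ⟨hβ0, hβ1⟩ := hβ
  obtain ⟨K, hK, hKl⟩ : ∃ K : ℝ, 0 < K ∧ C₀ * K ^ l = 1 / 2 := by
    refine ⟨(1 / (2 * C₀)) ^ (1 / l), by positivity, ?_⟩
    rw [← Real.rpow_mul (by positivity), one_div_mul_cancel hl.ne', Real.rpow_one]
    field_simp
  have e1 : ∀ᶠ t in atTop, s t < K * Real.exp (-(1 / α + 1 / β)) :=
    hslim.eventually_lt_const (by positivity)
  have e2 : ∀ᶠ t : ℝ in atTop, Real.exp (-(ω / 2 * t)) < K / (2 * C₀) :=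
    (Real.tendsto_exp_neg_atTop_nhds_zero.comp
      (tendsto_id.const_mul_atTop (half_pos hω))).eventually_lt_const (by positivity)
  obtain ⟨T, hT⟩ := eventually_atTop.1 (e1.and e2)
  -- `R ≥ 2 / ω` makes the rate `1 / R` at most `ω / 2`, so that half of `exp (-ω t)` is
  -- left over to absorb the constant in front of the inhomogeneous term.
  obtain ⟨R, hRT, hR1, hRω, hR0⟩ : ∃ R : ℝ, T ≤ R ∧ T₁ ≤ R ∧ 2 / ω ≤ R ∧ 0 < R :=
    ⟨max (max T T₁) (2 / ω), (le_max_left _ _).trans (le_max_left _ _),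
      (le_max_right _ _).trans (le_max_left _ _), le_max_right _ _,
      lt_max_of_lt_right (by positivity)⟩
  have hκω : 1 / R ≤ ω / 2 := by
    rw [div_le_iff₀ hω] at hRω
    rw [div_le_div_iff₀ hR0 two_pos]
    linarith
  have hκ0 : 0 < 1 / R := by positivity
  have base : ∀ t, R ≤ t → 1 / R * t ≤ 1 / α + 1 / β → s t ≤ K * Real.exp (-(1 / R) * t) := by
    intro t ht h
    refine (hT t (hRT.trans ht)).1.le.trans ?_
    gcongr
    linarith
  -- Induction on the number of contractions by `max α β` that bring `t` down to `R`.
  have key : ∀ n : ℕ, ∀ t, R ≤ t → max α β ^ n * t ≤ R →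
      s t ≤ K * Real.exp (-(1 / R) * t) := by
    intro n
    induction n with
    | zero =>
      intro t ht h
      refine base t ht ?_
      have h1 : 1 / R * t ≤ 1 := by
        rw [one_div_mul_eq_div, div_le_one hR0]
        simpa using h
      have h2 : 1 ≤ 1 / α := (one_le_div hα0).2 hα1.le
      have h3 : 0 < 1 / β := by positivity
      linarith
    | succ n ih =>
      intro t ht h
      have ht0 : 0 < t := hR0.trans_le ht
      have hα' : 0 < 1 / α := by positivity
      have hβ' : 0 < 1 / β := by positivity
      rcases le_total (α * t) R with ha | ha
      · refine base t ht ?_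
        have : 1 / R * t ≤ 1 / α := by
          rw [one_div_mul_eq_div, div_le_div_iff₀ hR0 hα0]
          linarith
        linarith
      rcases le_total (β * t) R with hb | hb
      · refine base t ht ?_
        have : 1 / R * t ≤ 1 / β := by
          rw [one_div_mul_eq_div, div_le_div_iff₀ hR0 hβ0]
          linarith
        linarith
      have hstep : ∀ c, c ≤ max α β → max α β ^ n * (c * t) ≤ R := by
        intro c hc
        refine le_trans ?_ h
        rw [pow_succ, mul_assoc]
        have : 0 < max α β := lt_max_of_lt_left hα0
        gcongr
      have h1 := prod_bound (hs0 (α * t)) hK hl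
        (ih _ hb (hstep β (le_max_right _ _))) (ih _ ha (hstep α (le_max_left _ _)))
      have h2 : Real.exp (-(1 / R * (l * α + β)) * t) ≤ Real.exp (-(1 / R) * t) := by
        refine Real.exp_le_exp.2 (mul_le_mul_of_nonneg_right ?_ ht0.le)
        nlinarith
      have h3 : Real.exp (-ω * t) ≤ K / (2 * C₀) * Real.exp (-(1 / R) * t) := by
        calc Real.exp (-ω * t)
            = Real.exp (-(ω / 2 * t)) * Real.exp (-(ω / 2) * t) := by
              rw [← Real.exp_add]; congr 1; ring
          _ ≤ _ := by
              gcongr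
              exact (hT t (hRT.trans ht)).2.le
      calc s t ≤ C₀ * (s (β * t) * s (α * t) ^ l + Real.exp (-ω * t)) := hrec t (hR1.trans ht)
        _ ≤ C₀ * (K * K ^ l * Real.exp (-(1 / R) * t)
              + K / (2 * C₀) * Real.exp (-(1 / R) * t)) := by
            exact mul_le_mul_of_nonneg_left (add_le_add (h1.trans (by gcongr)) h3) hC₀.le
        _ = (C₀ * K ^ l + 1 / 2) * (K * Real.exp (-(1 / R) * t)) := by
            field_simp
        _ = _ := by rw [hKl]; ring
  refine ⟨1 / R, hκ0, K, R, hK, fun t ht => ?_⟩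
  have hlim : Tendsto (fun n : ℕ => max α β ^ n * t) atTop (nhds (0 * t)) :=
    (tendsto_pow_atTop_nhds_zero_of_lt_one (hα0.le.trans (le_max_left _ _))
      (max_lt hα1 hβ1)).mul_const t
  rw [zero_mul] at hlim
  obtain ⟨n, hn⟩ := (hlim.eventually_lt_const hR0).exists
  exact key n t ht hn.le

lemma decay_full {s : ℝ → ℝ} {α β l ω C₀ T₁ : ℝ} (hs0 : ∀ t, 0 ≤ s t)
    (hslim : Tendsto s atTop (nhds 0))
    (hα : α ∈ Ioo (0:ℝ) 1) (hβ : β ∈ Ioo (0:ℝ) 1) (hl : 0 < l) (hω : 0 < ω) (hC₀ : 0 < C₀)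
    (hlαβ : 1 < l * α + β)
    (hrec : ∀ t, T₁ ≤ t → s t ≤ C₀ * (s (β * t) * s (α * t) ^ l + Real.exp (-ω * t))) :
    ExpDecay s ω := by
  obtain ⟨κ, hκ, hd⟩ := decay_start hs0 hslim hα hβ hl hω hC₀ hlαβ hrec
  have iter : ∀ n : ℕ, ExpDecay s (min (κ * (l * α + β) ^ (n + 1)) ω) := by
    intro n
    induction n with
    | zero =>
      exact decay_improve hs0 hα.1 hβ.1 hl hC₀ hrec hd (by simp) (min_le_right _ _)
    | succ n ih =>
      refine decay_improve hs0 hα.1 hβ.1 hl hC₀ hrec ih ?_ (min_le_right _ _)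
      rw [min_mul_of_nonneg _ _ (by linarith), mul_assoc, ← pow_succ]
      exact min_le_min_left _ (le_mul_of_one_le_right hω.le hlαβ.le)
  obtain ⟨n, hn⟩ := pow_unbounded_of_one_lt (ω / κ) hlαβ
  have h : ω ≤ κ * (l * α + β) ^ (n + 1) := by
    rw [← div_le_iff₀' hκ]
    exact hn.le.trans (pow_le_pow_right₀ hlαβ.le n.le_succ)
  simpa only [min_eq_right h] using iter n

/-- Bootstrap lemma: if `S : (0,∞) → [0,∞)` tends to `0` at infinity and satisfies the
recurrence `S(A) ≤ C₀ (S(A^β) S(A^α)^l + A^{-ω})` with `α, β ∈ (0,1)`, `l, ω > 0` and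
`lα + β > 1`, then `S(A) ≲ A^{-ω}` for large `A`. -/
theorem bootstrap_polynomial_decay
    (S : ℝ → ℝ) (hS0 : ∀ A : ℝ, 0 < A → 0 ≤ S A)
    (hSlim : Tendsto S atTop (nhds 0))
    (α β l ω C₀ A₁ : ℝ)
    (hα : α ∈ Ioo (0:ℝ) 1) (hβ : β ∈ Ioo (0:ℝ) 1)
    (hl : 0 < l) (hω : 0 < ω) (hlαβ : 1 < l * α + β)
    (hC₀ : 0 < C₀) (hA₁ : 0 < A₁)
    (hrec : ∀ A : ℝ, A₁ ≤ A →
      S A ≤ C₀ * (S (A ^ β) * (S (A ^ α)) ^ l + A ^ (-ω))) :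
    ∃ C' A₂ : ℝ, 0 < C' ∧ 0 < A₂ ∧
      ∀ A : ℝ, A₂ ≤ A → S A ≤ C' * A ^ (-ω) := by
  have h := decay_full (s := fun t => S (Real.exp t)) (T₁ := Real.log A₁) (C₀ := C₀)
    (fun t => hS0 _ (Real.exp_pos t)) (hSlim.comp Real.tendsto_exp_atTop) hα hβ hl hω hC₀ hlαβ
    (fun t ht => by
      have := hrec (Real.exp t) ((Real.log_le_iff_le_exp hA₁).1 ht)
      simp only [← Real.exp_mul] at this
      rwa [mul_comm t β, mul_comm t α, mul_comm t (-ω)] at this)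
  obtain ⟨C, T, hC, h⟩ := h
  refine ⟨C, Real.exp T, hC, Real.exp_pos T, fun A hA => ?_⟩
  have hA0 : 0 < A := (Real.exp_pos T).trans_le hA
  have h1 := h (Real.log A) ((Real.le_log_iff_exp_le hA0).2 hA)
  beta_reduce at h1
  rwa [Real.exp_log hA0, mul_comm (-ω), ← Real.rpow_def_of_pos hA0] at h1
end

section
/- Let g ∈ (0,1), C > 0, p > 1 and γ ≤ 0. Suppose f : (0,∞) → [0,∞) is nonincreasing, f(r) → 0 as r → ∞, and f(r) ≤ g·f(r/2) + C·f(r/2)^p·r^γ for all r > 0. Then there exist constants C' > 0 and R' > 0 such that f(r) ≤ C'·r^{log₂((g+1)/2)} for all r ≥ R'. (Note log₂((g+1)/2) < 0, so this is a quantitative polynomial decay rate.) -/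
/-!
Since `f → 0` and `p > 1`, for large `r` the nonlinear factor satisfies
`C f(r/2)^(p-1) r^γ ≤ (1 - g)/2`, so the recurrence becomes the linear contraction
`f r ≤ q f(r/2)` with `q = (g+1)/2 < 1` (`eventually_contraction`). Writing `q = 2^s` with
`s = log₂ q`, the comparison function `r^s` satisfies this relation with equality, so a bound
`f r ≤ C' r^s` on one dyadic interval `[R, 2R]` (where `f` is bounded by monotonicity) propagates
to all larger `r` by induction over dyadic scales (`le_rpow_of_contraction`).
-/


open Set Filter

/-- Smallness of `f` at infinity absorbs the superlinear term into the linear one, at the cost of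
replacing `g` by the midpoint of `g` and `1`. -/
lemma eventually_contraction
    {g C p γ : ℝ} (hg : g < 1) (hC : 0 < C) (hp : 1 < p) (hγ : γ ≤ 0)
    {f : ℝ → ℝ} (hf0 : ∀ r : ℝ, 0 < r → 0 ≤ f r)
    (hlim : Tendsto f atTop (nhds 0))
    (hrec : ∀ r : ℝ, 0 < r → f r ≤ g * f (r / 2) + C * (f (r / 2)) ^ p * r ^ γ) :
    ∃ R : ℝ, 1 ≤ R ∧ ∀ r : ℝ, 2 * R ≤ r → f r ≤ (g + 1) / 2 * f (r / 2) := by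
  have hlim' : Tendsto (fun r => C * f r ^ (p - 1)) atTop (nhds 0) := by
    have h := (hlim.rpow_const (p := p - 1) (Or.inr (by linarith))).const_mul C
    rwa [Real.zero_rpow (by linarith), mul_zero] at h
  obtain ⟨R, hR⟩ := eventually_atTop.1
    (hlim'.eventually_le_const (show (0 : ℝ) < (1 - g) / 2 by linarith))
  refine ⟨max R 1, le_max_right _ _, fun r hr => ?_⟩
  have h1 : 1 ≤ r / 2 := by linarith [le_max_right R 1]
  have hsmall : C * f (r / 2) ^ (p - 1) ≤ (1 - g) / 2 := hR _ (by linarith [le_max_left R 1])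
  have hf : 0 ≤ f (r / 2) := hf0 _ (by linarith)
  have hpow : f (r / 2) ^ p = f (r / 2) * f (r / 2) ^ (p - 1) := by
    have h := Real.rpow_add_of_nonneg hf zero_le_one (show 0 ≤ p - 1 by linarith)
    rwa [add_sub_cancel, Real.rpow_one] at h
  have hrγ : r ^ γ ≤ 1 := Real.rpow_le_one_of_one_le_of_nonpos (by linarith) hγ
  calc f r ≤ g * f (r / 2) + C * f (r / 2) ^ p * r ^ γ := hrec r (by linarith)
    _ ≤ g * f (r / 2) + C * f (r / 2) ^ p * 1 := by gcongr
    _ = g * f (r / 2) + C * f (r / 2) ^ (p - 1) * f (r / 2) := by rw [hpow]; ring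
    _ ≤ g * f (r / 2) + (1 - g) / 2 * f (r / 2) := by gcongr
    _ = (g + 1) / 2 * f (r / 2) := by ring

/-- A linear contraction by `2^s` at each doubling propagates a power bound from `[R, 2R]` to
`[R, ∞)`. -/
lemma le_rpow_of_contraction {f : ℝ → ℝ} {R K s : ℝ} (hR : 0 < R)
    (hbase : ∀ r : ℝ, R ≤ r → r ≤ 2 * R → f r ≤ K * r ^ s)
    (hstep : ∀ r : ℝ, 2 * R ≤ r → f r ≤ 2 ^ s * f (r / 2)) {r : ℝ} (hr : R ≤ r) :
    f r ≤ K * r ^ s := by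
  have key : ∀ n : ℕ, ∀ r : ℝ, R ≤ r → r ≤ 2 ^ n * (2 * R) → f r ≤ K * r ^ s := by
    intro n
    induction n with
    | zero => intro r h1 h2; exact hbase r h1 (by simpa using h2)
    | succ n ih =>
      intro r h1 h2
      rcases le_total r (2 * R) with h | h
      · exact hbase r h1 h
      · have h2' : r / 2 ≤ 2 ^ n * (2 * R) := by rw [pow_succ] at h2; linarith
        calc f r ≤ 2 ^ s * f (r / 2) := hstep r h
          _ ≤ 2 ^ s * (K * (r / 2) ^ s) := by gcongr; exact ih _ (by linarith) h2'
          _ = K * (2 * (r / 2)) ^ s := by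
            rw [Real.mul_rpow (by norm_num) (by linarith)]; ring
          _ = K * r ^ s := by rw [mul_div_cancel₀ _ (two_ne_zero (α := ℝ))]
  obtain ⟨n, hn⟩ := pow_unbounded_of_one_lt (r / (2 * R)) (one_lt_two (α := ℝ))
  exact key n r hr ((div_le_iff₀ (by linarith)).1 hn.le)

/-- Decay-improvement lemma: if a nonincreasing `f : (0,∞) → [0,∞)` tends to `0`
at infinity and satisfies `f(r) ≤ g f(r/2) + C f(r/2)^p r^γ` with `g ∈ (0,1)`, `C > 0`,
`p > 1` and `γ ≤ 0`, then `f(r) ≲ r^{log₂((g+1)/2)}` for large `r`. -/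
theorem decay_improvement
    (g C p γ : ℝ) (hg : g ∈ Ioo (0:ℝ) 1) (hC : 0 < C) (hp : 1 < p) (hγ : γ ≤ 0)
    (f : ℝ → ℝ)
    (hf0 : ∀ r : ℝ, 0 < r → 0 ≤ f r)
    (hmono : AntitoneOn f (Ioi 0))
    (hlim : Tendsto f atTop (nhds 0))
    (hrec : ∀ r : ℝ, 0 < r → f r ≤ g * f (r / 2) + C * (f (r / 2)) ^ p * r ^ γ) :
    ∃ C' R' : ℝ, 0 < C' ∧ 0 < R' ∧
      ∀ r : ℝ, R' ≤ r → f r ≤ C' * r ^ (Real.logb 2 ((g + 1) / 2)) := by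
  obtain ⟨hg0, hg1⟩ := hg
  obtain ⟨R, hR1, hcon⟩ := eventually_contraction hg1 hC hp hγ hf0 hlim hrec
  have hR : 0 < R := by linarith
  set s := Real.logb 2 ((g + 1) / 2) with hs
  have h2s : (2 : ℝ) ^ s = (g + 1) / 2 :=
    Real.rpow_logb (by norm_num) (by norm_num) (by linarith)
  have hs0 : s ≤ 0 := (Real.logb_neg one_lt_two (by linarith) (by linarith)).le
  have hfR := hf0 R hR
  have hpos : (0 : ℝ) < (2 * R) ^ s := by positivity
  -- `r ^ s` is smallest at the right end of `[R, 2R]`, which dictates the constant; the `+ 1`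
  -- keeps it positive even if `f R = 0`.
  refine ⟨(f R + 1) / (2 * R) ^ s, R, by positivity, hR, fun r hr =>
    le_rpow_of_contraction hR (fun x h1 h2 => ?_) (fun x hx => h2s ▸ hcon x hx) hr⟩
  have hx : 0 < x := hR.trans_le h1
  calc f x ≤ f R := hmono hR hx h1
    _ ≤ f R + 1 := by linarith
    _ = (f R + 1) / (2 * R) ^ s * (2 * R) ^ s := by field_simp
    _ ≤ (f R + 1) / (2 * R) ^ s * x ^ s := by
      gcongr ?_ * ?_
      exact Real.rpow_le_rpow_of_nonpos hx h2 hs0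
end

section
/- Let I ⊆ ℝ be an interval, let w : (0,∞) × I → ℝ be twice continuously differentiable, and set h(r,t) = ∂_t²w(r,t) − ∂_r²w(r,t) and z₁(r,t) = ∂_t w(r,t) − ∂_r w(r,t). Let r₀ > 0, M > 0 and t₀ ∈ I with t₀ + M ∈ I. Then | ( ∫_{r₀}^{4r₀} z₁(r, t₀)² dr )^{1/2} − ( ∫_{r₀+M}^{4r₀+M} z₁(r, t₀+M)² dr )^{1/2} | ≤ ( ∫_{r₀}^{4r₀} ( ∫₀^M h(r+t, t₀+t) dt )² dr )^{1/2}. -/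
/-!
The wave operator factors as `∂_t² - ∂_r² = (∂_t + ∂_r)(∂_t - ∂_r)`, so along an outgoing
characteristic `s ↦ (r + s, t₀ + s)` the component `z₁ = ∂_t w - ∂_r w` has derivative `h`
(`hasDerivWithinAt_characteristic`, `fderivWithin_fderivWithin_factor`). Integrating over `s ∈ [0, M]` gives
`∫₀^M h(r + s, t₀ + s) ds = z₁(r + M, t₀ + M) - z₁(r, t₀)` for each `r > 0`, and the claim is the
reverse triangle inequality in `L²([r₀, 4r₀])` (`abs_sqrt_integral_sub_le`), after translating the
second integral by `M`.

The factorisation needs equality of the mixed second derivatives, including at times which are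
endpoints of `I`; it holds there because a convex set with nonempty interior lies in the closure of
its interior.
-/

open Set Filter MeasureTheory

/-- Reverse triangle inequality in `L²([a, b])`, for continuous functions. -/
lemma abs_sqrt_integral_sub_le {a b : ℝ} (hab : a ≤ b) {f g : ℝ → ℝ}
    (hf : ContinuousOn f (Icc a b)) (hg : ContinuousOn g (Icc a b)) :
    |Real.sqrt (∫ r in a..b, f r ^ 2) - Real.sqrt (∫ r in a..b, g r ^ 2)| ≤
      Real.sqrt (∫ r in a..b, (g r - f r) ^ 2) := by
  have memLp : ∀ {k : ℝ → ℝ}, ContinuousOn k (Icc a b) →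
      MemLp k 2 (volume.restrict (Ioc a b)) := by
    intro k hk
    have hm : AEStronglyMeasurable k (volume.restrict (Ioc a b)) :=
      (hk.mono Ioc_subset_Icc_self).aestronglyMeasurable measurableSet_Ioc
    rw [memLp_two_iff_integrable_sq hm]
    exact ((hk.pow 2).integrableOn_Icc).mono_set Ioc_subset_Icc_self
  have norm_eq : ∀ {k : ℝ → ℝ} (hk : MemLp k 2 (volume.restrict (Ioc a b))),
      ‖hk.toLp k‖ = Real.sqrt (∫ r in a..b, k r ^ 2) := by
    intro k hk
    rw [Lp.norm_toLp, hk.eLpNorm_eq_integral_rpow_norm (by norm_num) (by norm_num),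
      ENNReal.toReal_ofReal (by positivity), intervalIntegral.integral_of_le hab,
      Real.sqrt_eq_rpow]
    norm_num
  have hF := memLp hf
  have hG := memLp hg
  have key := abs_norm_sub_norm_le (hG.toLp g) (hF.toLp f)
  rw [← MemLp.toLp_sub, norm_eq, norm_eq, norm_eq, abs_sub_comm] at key
  exact key

/-- The factorisation `∂_t² - ∂_r² = (∂_t + ∂_r)(∂_t - ∂_r)`, in coordinates `(r, t)`: the
derivative of `∂_t f - ∂_r f = Df (-1, 1)` in the direction `(1, 1)` is the difference of the pure
second derivatives. -/
lemma fderivWithin_fderivWithin_factor {f : ℝ × ℝ → ℝ} {S : Set (ℝ × ℝ)} {q : ℝ × ℝ}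
    (hf : ContDiffOn ℝ 2 f S) (hS : Convex ℝ S) (hS' : (interior S).Nonempty) (hq : q ∈ S) :
    fderivWithin ℝ (fderivWithin ℝ f S) S q (1, 1) (-1, 1) =
      fderivWithin ℝ (fderivWithin ℝ f S) S q (0, 1) (0, 1) -
        fderivWithin ℝ (fderivWithin ℝ f S) S q (1, 0) (1, 0) := by
  have hsymm : IsSymmSndFDerivWithinAt ℝ f S q := by
    refine (hf q hq).isSymmSndFDerivWithinAt (by simp) (uniqueDiffOn_convex hS hS') ?_ hq
    rw [hS.closure_interior_eq_closure_of_nonempty_interior hS']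
    exact subset_closure hq
  have h := hsymm (1, 0) (0, 1)
  have e1 : ((1, 1) : ℝ × ℝ) = (1, 0) + (0, 1) := by simp
  have e2 : ((-1, 1) : ℝ × ℝ) = (0, 1) - (1, 0) := by simp
  rw [e1, e2]
  simp only [map_add, map_sub, add_apply]
  rw [h]
  ring

/-- With `G = Df` this differentiates `∂_t f - ∂_r f = Df (-1, 1)` along the outgoing characteristic
through `(r, t)`. -/
lemma hasDerivWithinAt_characteristic {G : ℝ × ℝ → ℝ × ℝ →L[ℝ] ℝ} {S : Set (ℝ × ℝ)}
    (hG : DifferentiableOn ℝ G S) {r t s : ℝ} {J : Set ℝ} (hJ : ∀ σ ∈ J, (r + σ, t + σ) ∈ S)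
    (hs : s ∈ J) :
    HasDerivWithinAt (fun σ => G (r + σ, t + σ) (-1, 1))
      (fderivWithin ℝ G S (r + s, t + s) (1, 1) (-1, 1)) J s := by
  have hc : HasDerivWithinAt (fun σ : ℝ => (r + σ, t + σ)) ((1, 1) : ℝ × ℝ) J s :=
    (((hasDerivAt_id s).const_add r).prodMk ((hasDerivAt_id s).const_add t)).hasDerivWithinAt
  have h1 := (hG _ (hJ s hs)).hasFDerivWithinAt.comp_hasDerivWithinAt s hc hJ
  simpa using h1.clm_apply (hasDerivWithinAt_const s J ((-1, 1) : ℝ × ℝ))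

/-- Transport of the outgoing component `z₁ = ∂_t w - ∂_r w` along outgoing
characteristics: for a `C²` function `w` on `(0,∞) × I` with
`h = ∂_t² w - ∂_r² w`, the `L²` norm of `z₁` over `[r₀, 4r₀]` at time `t₀` and the
`L²` norm of `z₁` over `[r₀+M, 4r₀+M]` at time `t₀+M` differ by at most the stated
integral of the forcing `h` along characteristics. -/
theorem outgoing_energy_transport
    (I : Set ℝ) (hI : I.OrdConnected)
    (w wt wtt wr wrr : ℝ → ℝ → ℝ)
    (hC2 : ContDiffOn ℝ 2 (fun q : ℝ × ℝ => w q.1 q.2) (Ioi 0 ×ˢ I))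
    (hwt : ∀ r ∈ Ioi (0:ℝ), ∀ t ∈ I,
      HasDerivWithinAt (fun τ => w r τ) (wt r t) I t)
    (hwtt : ∀ r ∈ Ioi (0:ℝ), ∀ t ∈ I,
      HasDerivWithinAt (fun τ => wt r τ) (wtt r t) I t)
    (hwr : ∀ r ∈ Ioi (0:ℝ), ∀ t ∈ I,
      HasDerivWithinAt (fun ρ => w ρ t) (wr r t) (Ioi 0) r)
    (hwrr : ∀ r ∈ Ioi (0:ℝ), ∀ t ∈ I,
      HasDerivWithinAt (fun ρ => wr ρ t) (wrr r t) (Ioi 0) r)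
    (r₀ M t₀ : ℝ) (hr₀ : 0 < r₀) (hM : 0 < M)
    (ht₀ : t₀ ∈ I) (ht₁ : t₀ + M ∈ I) :
    |Real.sqrt (∫ r in r₀..4 * r₀, (wt r t₀ - wr r t₀) ^ 2)
      - Real.sqrt (∫ r in r₀ + M..4 * r₀ + M,
          (wt r (t₀ + M) - wr r (t₀ + M)) ^ 2)| ≤
    Real.sqrt (∫ r in r₀..4 * r₀,
      (∫ t in (0:ℝ)..M, (wtt (r + t) (t₀ + t) - wrr (r + t) (t₀ + t))) ^ 2) := by
  set f : ℝ × ℝ → ℝ := fun q => w q.1 q.2 with hf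
  set S : Set (ℝ × ℝ) := Ioi 0 ×ˢ I with hSdef
  have hIcc : Icc t₀ (t₀ + M) ⊆ I := hI.out ht₀ ht₁
  have hIint : (interior I).Nonempty := by
    refine ⟨t₀ + M / 2, mem_interior_iff_mem_nhds.2 (mem_of_superset ?_ hIcc)⟩
    exact Icc_mem_nhds (by linarith) (by linarith)
  have hIconv : Convex ℝ I := hI.convex
  have hSconv : Convex ℝ S := (convex_Ioi 0).prod hIconv
  have hSint : (interior S).Nonempty := by
    rw [hSdef, interior_prod_eq, interior_Ioi]
    exact nonempty_Ioi.prod hIint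
  have hSu : UniqueDiffOn ℝ S := uniqueDiffOn_convex hSconv hSint
  have hIu : UniqueDiffOn ℝ I := uniqueDiffOn_convex hIconv hIint
  have hRu : UniqueDiffOn ℝ (Ioi (0 : ℝ)) := isOpen_Ioi.uniqueDiffOn
  set G := fderivWithin ℝ f S with hG
  have hG1 : ContDiffOn ℝ 1 G S := hC2.fderivWithin hSu (by norm_num)
  have hGd : DifferentiableOn ℝ G S := hG1.differentiableOn (by norm_num)
  have hfd : DifferentiableOn ℝ f S := hC2.differentiableOn (by norm_num)
  have lineT : ∀ r t : ℝ, HasDerivWithinAt (fun τ : ℝ => (r, τ)) ((0, 1) : ℝ × ℝ) I t :=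
    fun r t => ((hasDerivAt_const t r).prodMk (hasDerivAt_id t)).hasDerivWithinAt
  have lineR : ∀ r t : ℝ, HasDerivWithinAt (fun ρ : ℝ => (ρ, t)) ((1, 0) : ℝ × ℝ) (Ioi 0) r :=
    fun r t => ((hasDerivAt_id r).prodMk (hasDerivAt_const r t)).hasDerivWithinAt
  have ewt : ∀ r ∈ Ioi (0:ℝ), ∀ t ∈ I, wt r t = G (r, t) (0, 1) := by
    intro r hr t ht
    have h1 := (hfd (r, t) ⟨hr, ht⟩).hasFDerivWithinAt.comp_hasDerivWithinAt t (lineT r t)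
      (show MapsTo (fun τ => (r, τ)) I S from fun _ hτ => ⟨hr, hτ⟩)
    exact (hIu t ht).eq_deriv _ (hwt r hr t ht) h1
  have ewr : ∀ r ∈ Ioi (0:ℝ), ∀ t ∈ I, wr r t = G (r, t) (1, 0) := by
    intro r hr t ht
    have h1 := (hfd (r, t) ⟨hr, ht⟩).hasFDerivWithinAt.comp_hasDerivWithinAt r (lineR r t)
      (show MapsTo (fun ρ => (ρ, t)) (Ioi 0) S from fun _ hρ => ⟨hρ, ht⟩)
    exact (hRu r hr).eq_deriv _ (hwr r hr t ht) h1
  have ewtt : ∀ r ∈ Ioi (0:ℝ), ∀ t ∈ I,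
      wtt r t = fderivWithin ℝ G S (r, t) (0, 1) (0, 1) := by
    intro r hr t ht
    have h1 := (hGd (r, t) ⟨hr, ht⟩).hasFDerivWithinAt.comp_hasDerivWithinAt t (lineT r t)
      (show MapsTo (fun τ => (r, τ)) I S from fun _ hτ => ⟨hr, hτ⟩)
    have h2 := h1.clm_apply (hasDerivWithinAt_const t I ((0, 1) : ℝ × ℝ))
    have h3 := h2.congr (fun τ hτ => ewt r hr τ hτ) (ewt r hr t ht)
    simpa using (hIu t ht).eq_deriv _ (hwtt r hr t ht) h3
  have ewrr : ∀ r ∈ Ioi (0:ℝ), ∀ t ∈ I,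
      wrr r t = fderivWithin ℝ G S (r, t) (1, 0) (1, 0) := by
    intro r hr t ht
    have h1 := (hGd (r, t) ⟨hr, ht⟩).hasFDerivWithinAt.comp_hasDerivWithinAt r (lineR r t)
      (show MapsTo (fun ρ => (ρ, t)) (Ioi 0) S from fun _ hρ => ⟨hρ, ht⟩)
    have h2 := h1.clm_apply (hasDerivWithinAt_const r (Ioi 0) ((1, 0) : ℝ × ℝ))
    have h3 := h2.congr (fun ρ hρ => ewr ρ hρ t ht) (ewr r hr t ht)
    simpa using (hRu r hr).eq_deriv _ (hwrr r hr t ht) h3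
  have ez : ∀ r ∈ Ioi (0:ℝ), ∀ t ∈ I, wt r t - wr r t = G (r, t) (-1, 1) := by
    intro r hr t ht
    rw [ewt r hr t ht, ewr r hr t ht, ← map_sub]
    simp
  have zcont : ∀ t ∈ I, ContinuousOn (fun r => wt r t - wr r t) (Ioi 0) := by
    intro t ht
    have h : ContinuousOn (fun r : ℝ => G (r, t) (-1, 1)) (Ioi 0) :=
      (hG1.continuousOn.comp (by fun_prop) fun r hr => ⟨hr, ht⟩).clm_apply continuousOn_const
    exact h.congr fun r hr => ez r hr t ht
  have duhamel : ∀ r ∈ Icc r₀ (4 * r₀),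
      ∫ t in (0:ℝ)..M, (wtt (r + t) (t₀ + t) - wrr (r + t) (t₀ + t)) =
        (wt (r + M) (t₀ + M) - wr (r + M) (t₀ + M)) - (wt r t₀ - wr r t₀) := by
    intro r hr
    have hr0 : 0 < r := hr₀.trans_le hr.1
    have hpath : ∀ σ ∈ Icc 0 M, (r + σ, t₀ + σ) ∈ S := fun σ hσ =>
      ⟨add_pos_of_pos_of_nonneg hr0 hσ.1, hIcc ⟨by linarith [hσ.1], by linarith [hσ.2]⟩⟩
    have hh : EqOn (fun t => wtt (r + t) (t₀ + t) - wrr (r + t) (t₀ + t))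
        (fun t => fderivWithin ℝ G S (r + t, t₀ + t) (1, 1) (-1, 1)) (uIcc 0 M) := by
      intro t ht
      rw [uIcc_of_le hM.le] at ht
      have hq := hpath t ht
      dsimp only
      rw [fderivWithin_fderivWithin_factor hC2 hSconv hSint hq, ewtt _ hq.1 _ hq.2,
        ewrr _ hq.1 _ hq.2]
    have hd := fun s hs => hasDerivWithinAt_characteristic hGd (s := s) hpath hs
    have hc : ContinuousOn (fun t => fderivWithin ℝ G S (r + t, t₀ + t) (1, 1) (-1, 1))
        (Icc 0 M) := by
      have h1 : ContinuousOn (fun t : ℝ => fderivWithin ℝ G S (r + t, t₀ + t)) (Icc 0 M) :=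
        (hG1.continuousOn_fderivWithin hSu le_rfl).comp (by fun_prop) hpath
      exact (h1.clm_apply continuousOn_const).clm_apply continuousOn_const
    rw [intervalIntegral.integral_congr hh,
      intervalIntegral.integral_eq_sub_of_hasDerivAt_of_le hM.le
        (fun s hs => (hd s hs).continuousWithinAt)
        (fun s hs => (hd s (Ioo_subset_Icc_self hs)).hasDerivAt (Icc_mem_nhds hs.1 hs.2))
        (hc.intervalIntegrable_of_Icc hM.le),
      ez r hr0 t₀ ht₀, ez (r + M) (add_pos hr0 hM) _ ht₁]
    simp
  have hle : r₀ ≤ 4 * r₀ := by linarith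
  have hrhs : ∫ r in r₀..4 * r₀,
      (∫ t in (0:ℝ)..M, (wtt (r + t) (t₀ + t) - wrr (r + t) (t₀ + t))) ^ 2 =
      ∫ r in r₀..4 * r₀,
        ((wt (r + M) (t₀ + M) - wr (r + M) (t₀ + M)) - (wt r t₀ - wr r t₀)) ^ 2 := by
    refine intervalIntegral.integral_congr fun r hr => ?_
    rw [uIcc_of_le hle] at hr
    rw [duhamel r hr]
  rw [hrhs, ← intervalIntegral.integral_comp_add_right
    (fun r => (wt r (t₀ + M) - wr r (t₀ + M)) ^ 2) M]
  refine abs_sqrt_integral_sub_le hle (f := fun r => wt r t₀ - wr r t₀)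
    (g := fun r => wt (r + M) (t₀ + M) - wr (r + M) (t₀ + M)) ?_ ?_
  · exact (zcont t₀ ht₀).mono fun r hr => hr₀.trans_le hr.1
  · exact (zcont _ ht₁).comp (f := fun r => r + M) (by fun_prop)
      fun r hr => add_pos (hr₀.trans_le hr.1) hM
end
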